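/- arXiv:1712.04549 — 2 statements merged into one kernel-verified Lean document; each statement's English description precedes it below -/
import Mathlib

section
/- If a graph H has no minor isomorphic to K_4, C_{3,2}, or A, then H has a vertex v such that H∖v is a forest. -/
/-!
Common definitions: minors, widths, connectivity, the specific graphs
`K4`, `K23`, `C32`, `graphA`, the binary trees `CT_h`, the graphs `𝒫_k`, `𝒬_k`,
the trees `T_h`, homeomorphic embeddings, cascades, and related notions,
following Dang--Thomas, "Minors of two-connected graphs of large path-width".
-/

open SimpleGraph

/-- A minor model of `H` in `G`: branch sets `f w` are nonempty, connected,
pairwise disjoint, and edges of `H` are realized by edges of `G` between branch sets. -/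
def IsMinorModel {W V : Type*} (H : SimpleGraph W) (G : SimpleGraph V) (f : W → Set V) : Prop :=
  (∀ w, (f w).Nonempty) ∧
  (∀ w, (G.induce (f w)).Connected) ∧
  (∀ w₁ w₂ : W, w₁ ≠ w₂ → Disjoint (f w₁) (f w₂)) ∧
  (∀ w₁ w₂ : W, H.Adj w₁ w₂ → ∃ v₁ ∈ f w₁, ∃ v₂ ∈ f w₂, G.Adj v₁ v₂)

/-- `H` is (isomorphic to) a minor of `G`. -/
def IsMinor {W V : Type*} (H : SimpleGraph W) (G : SimpleGraph V) : Prop :=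
  ∃ f : W → Set V, IsMinorModel H G f

/-- The complete graph on four vertices. -/
def K4 : SimpleGraph (Fin 4) := ⊤

/-- The complete bipartite graph `K_{2,3}`. -/
def K23 : SimpleGraph (Fin 2 ⊕ Fin 3) := completeBipartiteGraph (Fin 2) (Fin 3)

/-- The graph `A`: a cycle `a₁a₂a₃a₄a₅a₆a₁` plus the edges `a₁a₃`, `a₃a₅`, `a₅a₁`. -/
def graphA : SimpleGraph (Fin 6) :=
  SimpleGraph.fromEdgeSet
    {s(0, 1), s(1, 2), s(2, 3), s(3, 4), s(4, 5), s(5, 0), s(0, 2), s(2, 4), s(4, 0)}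

/-- The graph `C_{3,2}`: two disjoint triangles. -/
def C32 : SimpleGraph (Fin 2 × Fin 3) :=
  SimpleGraph.fromRel (fun u v => u.1 = v.1)

/-- A graph is outerplanar iff it has no `K₄` minor and no `K_{2,3}` minor
(the classical characterization of outerplanarity). -/
def Outerplanar {V : Type*} (G : SimpleGraph V) : Prop :=
  ¬ IsMinor K4 G ∧ ¬ IsMinor K23 G

/-- `G` is `k`-connected: it has more than `k` vertices and deleting fewer than `k`
vertices leaves a connected graph. -/
def IsKConnected {V : Type*} [Fintype V] (k : ℕ) (G : SimpleGraph V) : Prop :=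
  k + 1 ≤ Fintype.card V ∧
  ∀ S : Finset V, S.card < k → (G.induce ((↑S : Set V)ᶜ)).Connected

/-- `(Tr, X)` is a tree-decomposition of `G`: `Tr` is a tree, the bags `X t` cover all
vertices and edges (W1), and whenever `t₂` lies on the path of `Tr` between `t₁` and `t₃`
we have `X t₁ ∩ X t₃ ⊆ X t₂` (W2). -/
def IsTreeDecomp {V T : Type*} (G : SimpleGraph V) (Tr : SimpleGraph T) (X : T → Finset V) :
    Prop :=
  Tr.IsTree ∧
  (∀ v : V, ∃ t, v ∈ X t) ∧
  (∀ u v : V, G.Adj u v → ∃ t, u ∈ X t ∧ v ∈ X t) ∧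
  (∀ (t₁ t₂ t₃ : T) (p : Tr.Walk t₁ t₃), p.IsPath → t₂ ∈ p.support →
    ∀ v : V, v ∈ X t₁ → v ∈ X t₃ → v ∈ X t₂)

/-- A path-decomposition of `G`, with bags indexed by `Fin n`. -/
def IsPathDecomp {V : Type*} (G : SimpleGraph V) {n : ℕ} (X : Fin n → Finset V) : Prop :=
  (∀ v : V, ∃ i, v ∈ X i) ∧
  (∀ u v : V, G.Adj u v → ∃ i, u ∈ X i ∧ v ∈ X i) ∧
  (∀ i j k : Fin n, i ≤ j → j ≤ k → ∀ v : V, v ∈ X i → v ∈ X k → v ∈ X j)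

/-- The path-width of a finite graph: the least `w` such that `G` has a
path-decomposition all of whose bags have at most `w + 1` vertices. -/
noncomputable def pathwidth {V : Type*} [Fintype V] (G : SimpleGraph V) : ℕ :=
  sInf {w | ∃ (n : ℕ) (X : Fin n → Finset V), IsPathDecomp G X ∧ ∀ i, (X i).card ≤ w + 1}

/-- The tree-width of a finite graph: the least `w` such that `G` has a
tree-decomposition all of whose bags have at most `w + 1` vertices. -/
noncomputable def treewidth {V : Type*} [Fintype V] (G : SimpleGraph V) : ℕ :=
  sInf {w | ∃ (T : Type) (_ : Fintype T) (Tr : SimpleGraph T) (X : T → Finset V),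
    IsTreeDecomp G Tr X ∧ ∀ t, (X t).card ≤ w + 1}

/-- Vertices of the binary tree `CT_h`: paths from the root, recorded as reversed
lists of left/right moves, of length at most `h`. -/
abbrev CTVert (h : ℕ) := {l : List Bool // l.length ≤ h}

/-- The binary tree `CT_h` of height `h`. -/
def CTgraph (h : ℕ) : SimpleGraph (CTVert h) :=
  SimpleGraph.fromEdgeSet
    {e | ∃ (b : Bool) (σ : List Bool) (hσ : σ.length < h),
      e = s((⟨σ, le_of_lt hσ⟩ : CTVert h), (⟨b :: σ, by simpa using hσ⟩ : CTVert h))}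

/-- The graph `𝒫_k`: the binary tree `CT_k` together with one extra vertex (`none`)
adjacent to every leaf of `CT_k`. -/
def Pgraph (k : ℕ) : SimpleGraph (Option (CTVert k)) :=
  SimpleGraph.fromEdgeSet
    ({e | ∃ (b : Bool) (σ : List Bool) (hσ : σ.length < k),
        e = s(some (⟨σ, le_of_lt hσ⟩ : CTVert k), some (⟨b :: σ, by simpa using hσ⟩ : CTVert k))} ∪
     {e | ∃ l : CTVert k, l.1.length = k ∧ e = s(none, some l)})

/-- Vertices of `𝒬_k`: the two base vertices of the root triangle (`Sum.inl false` and
`Sum.inl true`), together with one apex vertex for each node of the complete binary tree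
of depth `< k` (recorded as a reversed list of moves). -/
abbrev QVert (k : ℕ) := Bool ⊕ {l : List Bool // l.length < k}

/-- The two ends of the base edge of the copy of the triangle at node `σ` of `𝒬_k`. -/
def qbase (k : ℕ) : List Bool → QVert k × QVert k
  | [] => (Sum.inl false, Sum.inl true)
  | b :: σ =>
      ((if b then (qbase k σ).2 else (qbase k σ).1),
        if h : σ.length < k then Sum.inr ⟨σ, h⟩ else Sum.inl false)

/-- The graph `𝒬_k`, built from triangles as in the recursive definition: the triangle at
node `σ` consists of the base edge `qbase k σ` together with the apex vertex `Sum.inr σ`;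
the base edge of `𝒬_k` is `s(Sum.inl false, Sum.inl true)`. -/
def Qgraph (k : ℕ) : SimpleGraph (QVert k) :=
  SimpleGraph.fromEdgeSet
    ({s(Sum.inl false, Sum.inl true)} ∪
     {e | ∃ (σ : List Bool) (h : σ.length < k),
        e = s(Sum.inr ⟨σ, h⟩, (qbase k σ).1) ∨ e = s(Sum.inr ⟨σ, h⟩, (qbase k σ).2)})

/-- The minor vertices of the tree `T_h` (one for each string of length `≤ h`). -/
abbrev MVert (h : ℕ) := {l : List Bool // l.length ≤ h}

/-- The major vertices of the tree `T_h` (one for each string of length `≤ h - 1`). -/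
abbrev JVert (h : ℕ) := {l : List Bool // l.length + 1 ≤ h}

/-- Vertices of the tree `T_h` (obtained from `CT_h` by subdividing every edge not incident
with a degree-one vertex and adding the minor root). -/
abbrev TVert (h : ℕ) := MVert h ⊕ JVert h

/-- The tree `T_h`: each major vertex `σ` is adjacent to the minor vertices `σ` (its parent),
`false :: σ` (its left neighbor) and `true :: σ` (its right neighbor). -/
def Tgraph (h : ℕ) : SimpleGraph (TVert h) :=
  SimpleGraph.fromEdgeSet
    {e | ∃ (σ : List Bool) (hσ : σ.length + 1 ≤ h),
      e = s(Sum.inr ⟨σ, hσ⟩, Sum.inl ⟨σ, Nat.le_of_succ_le hσ⟩) ∨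
      ∃ b : Bool, e = s(Sum.inr ⟨σ, hσ⟩, Sum.inl ⟨b :: σ, by simpa using hσ⟩)}

/-- A homeomorphic embedding of `TA` into `TB`: an injection such that for any two edges of
`TA` sharing an end `t`, the corresponding paths of `TB` are edge-disjoint. -/
def IsHomeoEmb {A B : Type*} (TA : SimpleGraph A) (TB : SimpleGraph B) (η : A → B) : Prop :=
  Function.Injective η ∧
  ∀ ⦃t t₁ t₂ : A⦄, TA.Adj t t₁ → TA.Adj t t₂ → t₁ ≠ t₂ →
    ∀ (p₁ : TB.Walk (η t) (η t₁)) (p₂ : TB.Walk (η t) (η t₂)),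
      p₁.IsPath → p₂.IsPath → ∀ e ∈ p₁.edges, e ∉ p₂.edges

/-- `v` lies in the span of `η`: it lies on a path of `TB` between two vertices in the
image of `η`. -/
def inSpan {A B : Type*} (TB : SimpleGraph B) (η : A → B) (v : B) : Prop :=
  ∃ (a₁ a₂ : A) (p : TB.Walk (η a₁) (η a₂)), p.IsPath ∧ v ∈ p.support

/-- A cascade of height `h` and size `s` in the tree-decomposition `(Tr, X)`:
a homeomorphic embedding of `T_h` with `|X (η t)| = s` for every minor vertex `t`
and `|X t| ≥ s` for every `t` in the span. -/
def IsCascade {V T : Type*} (Tr : SimpleGraph T) (X : T → Finset V) (h s : ℕ)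
    (η : TVert h → T) : Prop :=
  IsHomeoEmb (Tgraph h) Tr η ∧
  (∀ l : MVert h, (X (η (Sum.inl l))).card = s) ∧
  (∀ t : T, inSpan Tr η t → s ≤ (X t).card)

/-- An injective cascade with common intersection set `I`. -/
def IsInjectiveCascade {V T : Type*} (Tr : SimpleGraph T) (X : T → Finset V) (h s : ℕ)
    (η : TVert h → T) (I : Finset V) : Prop :=
  IsCascade Tr X h s η ∧ I.card < s ∧
  ∀ t t' : TVert h, t ≠ t' → ((X (η t) : Set V) ∩ (X (η t') : Set V)) = (I : Set V)

/-- A family of `s` disjoint paths in `G \ I` (a linkage). -/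
def IsLinkage {V : Type*} (G : SimpleGraph V) (I : Finset V) {s : ℕ} {x y : Fin s → V}
    (P : ∀ i : Fin s, G.Walk (x i) (y i)) : Prop :=
  (∀ i, (P i).IsPath) ∧
  (∀ i, ∀ v ∈ (P i).support, v ∉ I) ∧
  (∀ i j, i ≠ j → ∀ v ∈ (P i).support, v ∉ (P j).support)

/-- An ordered cascade: an injective cascade of size `s + |I|` with common intersection set
`I`, together with orderings `ξ t : Fin s → X (η t) \ I` of the bags at minor vertices, such
that at every major vertex there are left and right linkages connecting corresponding
vertices. -/
def IsOrderedCascade {V T : Type*} (G : SimpleGraph V) (Tr : SimpleGraph T)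
    (X : T → Finset V) (h s : ℕ) (η : TVert h → T) (I : Finset V)
    (ξ : MVert h → Fin s → V) : Prop :=
  IsInjectiveCascade Tr X h (s + I.card) η I ∧
  (∀ t : MVert h, Function.Injective (ξ t) ∧
    Set.range (ξ t) = (X (η (Sum.inl t)) : Set V) \ (I : Set V)) ∧
  ∀ (σ : List Bool) (hσ : σ.length + 1 ≤ h),
    (∃ P : ∀ i : Fin s,
        G.Walk (ξ ⟨σ, Nat.le_of_succ_le hσ⟩ i) (ξ ⟨false :: σ, by simpa using hσ⟩ i),
      IsLinkage G I P) ∧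
    (∃ Q : ∀ i : Fin s,
        G.Walk (ξ ⟨σ, Nat.le_of_succ_le hσ⟩ i) (ξ ⟨true :: σ, by simpa using hσ⟩ i),
      IsLinkage G I Q)

/-- The vertex set of the `η`-torso at the major vertex `σ` of `T_h`: the union of the bags
`X t - I` over all `t` such that the path in `Tr` from `t` to `η σ` contains none of the
images of the three minor neighbors of `σ` as an internal vertex. -/
def torsoSet {V T : Type*} (Tr : SimpleGraph T) (X : T → Finset V) {h : ℕ}
    (η : TVert h → T) (I : Finset V) (σ : List Bool) (hσ : σ.length + 1 ≤ h) : Set V :=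
  {v | v ∉ I ∧ ∃ t : T,
    (∀ p : Tr.Walk t (η (Sum.inr ⟨σ, hσ⟩)), p.IsPath →
      ∀ u : T,
        (u = η (Sum.inl ⟨σ, Nat.le_of_succ_le hσ⟩) ∨
         u = η (Sum.inl ⟨false :: σ, by simpa using hσ⟩) ∨
         u = η (Sum.inl ⟨true :: σ, by simpa using hσ⟩)) →
        u ∈ p.support → u = t ∨ u = η (Sum.inr ⟨σ, hσ⟩)) ∧
    v ∈ X t}

/-- `H` is a tripod in `G` with all vertices in `S`, center `c` and feet `f₁, f₂, f₃`:
the union of three paths from `c` to the feet, pairwise disjoint except for `c`,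
at least two of which have length at least one. -/
def IsTripodOn {V : Type*} (G : SimpleGraph V) (S : Set V) (H : G.Subgraph)
    (c f₁ f₂ f₃ : V) : Prop :=
  ∃ (W₁ : G.Walk c f₁) (W₂ : G.Walk c f₂) (W₃ : G.Walk c f₃),
    W₁.IsPath ∧ W₂.IsPath ∧ W₃.IsPath ∧
    (∀ v ∈ W₁.support, v ∈ S) ∧ (∀ v ∈ W₂.support, v ∈ S) ∧ (∀ v ∈ W₃.support, v ∈ S) ∧
    (∀ v, v ∈ W₁.support → v ∈ W₂.support → v = c) ∧
    (∀ v, v ∈ W₁.support → v ∈ W₃.support → v = c) ∧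
    (∀ v, v ∈ W₂.support → v ∈ W₃.support → v = c) ∧
    ((1 ≤ W₁.length ∧ 1 ≤ W₂.length) ∨ (1 ≤ W₁.length ∧ 1 ≤ W₃.length) ∨
      (1 ≤ W₂.length ∧ 1 ≤ W₃.length)) ∧
    H = W₁.toSubgraph ⊔ W₂.toSubgraph ⊔ W₃.toSubgraph

/-- The major vertex `σ` has property `A_{ij}` in the ordered cascade `η` with orderings
`ξ`: there are two disjoint tripods in the `η`-torso at `σ`, with feet as prescribed. -/
def HasPropA {V T : Type*} (G : SimpleGraph V) (Tr : SimpleGraph T) (X : T → Finset V)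
    {h s : ℕ} (η : TVert h → T) (I : Finset V) (ξ : MVert h → Fin s → V)
    (σ : List Bool) (hσ : σ.length + 1 ≤ h) (i j : Fin s) : Prop :=
  ∃ (Li Lj : G.Subgraph) (ci cj : V),
    (∃ m₂ m₃ : Fin s, (m₂ = i ∨ m₂ = j) ∧ (m₃ = i ∨ m₃ = j) ∧
      IsTripodOn G (torsoSet Tr X η I σ hσ) Li ci
        (ξ ⟨σ, Nat.le_of_succ_le hσ⟩ i)
        (ξ ⟨false :: σ, by simpa using hσ⟩ m₂)
        (ξ ⟨true :: σ, by simpa using hσ⟩ m₃)) ∧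
    (∃ m₂ m₃ : Fin s, (m₂ = i ∨ m₂ = j) ∧ (m₃ = i ∨ m₃ = j) ∧
      IsTripodOn G (torsoSet Tr X η I σ hσ) Lj cj
        (ξ ⟨σ, Nat.le_of_succ_le hσ⟩ j)
        (ξ ⟨false :: σ, by simpa using hσ⟩ m₂)
        (ξ ⟨true :: σ, by simpa using hσ⟩ m₃)) ∧
    Disjoint Li.verts Lj.verts

/-- The major vertex `σ` has property `B_{ij}`: there are two tripods `L_i`, `L_j` in the
`η`-torso at `σ`, with feet `v_{m,1}, v_{m,2}, v_{m,3}` where `{v_{i,y}, v_{j,y}}` equals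
`{ξ_{t_y} i, ξ_{t_y} j}` for each `y`, which intersect exactly in a path that is the
intersection of the branch of `L_i` to `v_{i,3}` and the branch of `L_j` to `v_{j,2}`,
and which avoids both centers. -/
def HasPropB {V T : Type*} (G : SimpleGraph V) (Tr : SimpleGraph T) (X : T → Finset V)
    {h s : ℕ} (η : TVert h → T) (I : Finset V) (ξ : MVert h → Fin s → V)
    (σ : List Bool) (hσ : σ.length + 1 ≤ h) (i j : Fin s) : Prop :=
  ∃ (vi vj : Fin 3 → V) (ci cj : V)
    (Wi : ∀ y : Fin 3, G.Walk ci (vi y)) (Wj : ∀ y : Fin 3, G.Walk cj (vj y)),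
    (∀ y : Fin 3, ({vi y, vj y} : Set V) =
      {(![ξ ⟨σ, Nat.le_of_succ_le hσ⟩,
          ξ ⟨false :: σ, by simpa using hσ⟩,
          ξ ⟨true :: σ, by simpa using hσ⟩] : Fin 3 → Fin s → V) y i,
       (![ξ ⟨σ, Nat.le_of_succ_le hσ⟩,
          ξ ⟨false :: σ, by simpa using hσ⟩,
          ξ ⟨true :: σ, by simpa using hσ⟩] : Fin 3 → Fin s → V) y j}) ∧
    (∀ y, (Wi y).IsPath) ∧ (∀ y, (Wj y).IsPath) ∧
    (∀ y, ∀ v ∈ (Wi y).support, v ∈ torsoSet Tr X η I σ hσ) ∧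
    (∀ y, ∀ v ∈ (Wj y).support, v ∈ torsoSet Tr X η I σ hσ) ∧
    (∀ y y' : Fin 3, y ≠ y' → ∀ v, v ∈ (Wi y).support → v ∈ (Wi y').support → v = ci) ∧
    (∀ y y' : Fin 3, y ≠ y' → ∀ v, v ∈ (Wj y).support → v ∈ (Wj y').support → v = cj) ∧
    ((1 ≤ (Wi 0).length ∧ 1 ≤ (Wi 1).length) ∨ (1 ≤ (Wi 0).length ∧ 1 ≤ (Wi 2).length) ∨
      (1 ≤ (Wi 1).length ∧ 1 ≤ (Wi 2).length)) ∧
    ((1 ≤ (Wj 0).length ∧ 1 ≤ (Wj 1).length) ∨ (1 ≤ (Wj 0).length ∧ 1 ≤ (Wj 2).length) ∨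
      (1 ≤ (Wj 1).length ∧ 1 ≤ (Wj 2).length)) ∧
    (((Wi 0).toSubgraph ⊔ (Wi 1).toSubgraph ⊔ (Wi 2).toSubgraph) ⊓
      ((Wj 0).toSubgraph ⊔ (Wj 1).toSubgraph ⊔ (Wj 2).toSubgraph)
        = (Wi 2).toSubgraph ⊓ (Wj 1).toSubgraph) ∧
    ∃ (x y : V) (p : G.Walk x y), p.IsPath ∧
      (Wi 2).toSubgraph ⊓ (Wj 1).toSubgraph = p.toSubgraph ∧
      ci ∉ p.support ∧ cj ∉ p.support

/-- The major vertex `σ` has property `AB_{ij}`: in the `η`-torso at `σ` there are disjoint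
paths `L_i, L_j` from `ξ_{t₁}(m)` to `ξ_{t₂}(m)` and disjoint paths `R_i, R_j` from
`ξ_{t₁}(m)` to `ξ_{t₃}(m)`, for `m ∈ {i, j}`. -/
def HasPropAB {V T : Type*} (G : SimpleGraph V) (Tr : SimpleGraph T) (X : T → Finset V)
    {h s : ℕ} (η : TVert h → T) (I : Finset V) (ξ : MVert h → Fin s → V)
    (σ : List Bool) (hσ : σ.length + 1 ≤ h) (i j : Fin s) : Prop :=
  ∃ (Li : G.Walk (ξ ⟨σ, Nat.le_of_succ_le hσ⟩ i) (ξ ⟨false :: σ, by simpa using hσ⟩ i))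
    (Lj : G.Walk (ξ ⟨σ, Nat.le_of_succ_le hσ⟩ j) (ξ ⟨false :: σ, by simpa using hσ⟩ j))
    (Ri : G.Walk (ξ ⟨σ, Nat.le_of_succ_le hσ⟩ i) (ξ ⟨true :: σ, by simpa using hσ⟩ i))
    (Rj : G.Walk (ξ ⟨σ, Nat.le_of_succ_le hσ⟩ j) (ξ ⟨true :: σ, by simpa using hσ⟩ j)),
    Li.IsPath ∧ Lj.IsPath ∧ Ri.IsPath ∧ Rj.IsPath ∧
    (∀ v ∈ Li.support, v ∈ torsoSet Tr X η I σ hσ) ∧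
    (∀ v ∈ Lj.support, v ∈ torsoSet Tr X η I σ hσ) ∧
    (∀ v ∈ Ri.support, v ∈ torsoSet Tr X η I σ hσ) ∧
    (∀ v ∈ Rj.support, v ∈ torsoSet Tr X η I σ hσ) ∧
    (∀ v ∈ Li.support, v ∉ Lj.support) ∧
    (∀ v ∈ Ri.support, v ∉ Rj.support)

/-- A monotone homeomorphic embedding `T_a ↪ T_h`: the minor root maps to the minor root,
and for every major vertex with trinity `(t₁, t₂, t₃)`, the images of `t₂` and `t₃` are the
left and right neighbors of the (major) image of the vertex. -/
def IsMonotoneEmb (a h : ℕ) (γ : TVert a → TVert h) : Prop :=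
  IsHomeoEmb (Tgraph a) (Tgraph h) γ ∧
  γ (Sum.inl ⟨[], Nat.zero_le a⟩) = Sum.inl ⟨[], Nat.zero_le h⟩ ∧
  ∀ (σ : List Bool) (hσ : σ.length + 1 ≤ a),
    ∃ (τ : List Bool) (hτ : τ.length + 1 ≤ h),
      γ (Sum.inr ⟨σ, hσ⟩) = Sum.inr ⟨τ, hτ⟩ ∧
      γ (Sum.inl ⟨false :: σ, by simpa using hσ⟩) = Sum.inl ⟨false :: τ, by simpa using hτ⟩ ∧
      γ (Sum.inl ⟨true :: σ, by simpa using hσ⟩) = Sum.inl ⟨true :: τ, by simpa using hτ⟩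

/-!
A *core*, a nonempty vertex set inducing minimum degree at least two, replaces cycles: on finite
graphs, deleting `v` leaves a forest iff every core contains `v`. An infinite counterexample would
contain a finite one: the subgraph induced by a finite core `D` and, for each `v ∈ D`, a finite core
avoiding `v`.

For finite graphs, induct on the number of vertices. A vertex of degree at most one can be deleted,
and a vertex with exactly two neighbours, which are nonadjacent, can be suppressed, since neither
operation destroys a core. If `x` has exactly two neighbours `y`, `z` and these are adjacent, then
cores avoiding `z` and `y` yield connected sets `P` and `Q` off the triangle such that `y` has two
neighbours in `P` and `z` has two in `Q`; these give `C₃,₂` if `P` and `Q` are disjoint, and `K₄`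
or `A` otherwise. Finally, let all degrees be at least three and let deleting `x` and `v` leave a
forest. A leaf of that forest is adjacent to both `x` and `v`, so a component with two leaves,
together with a third neighbour of `v`, gives `K₄`.
-/

section Connectivity

variable {V : Type*} {G : SimpleGraph V} {S T F : Set V} {a p q : V}

/-- Some edge of `G` has one end in `S` and the other in `T`. -/
def SetAdj (G : SimpleGraph V) (S T : Set V) : Prop :=
  ∃ a ∈ S, ∃ b ∈ T, G.Adj a b

theorem SetAdj.symm (h : SetAdj G S T) : SetAdj G T S := by
  obtain ⟨a, ha, b, hb, hab⟩ := h
  exact ⟨b, hb, a, ha, hab.symm⟩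

theorem SetAdj.mono {S' T' : Set V} (hS : S ⊆ S') (hT : T ⊆ T') (h : SetAdj G S T) :
    SetAdj G S' T' := by
  obtain ⟨a, ha, b, hb, hab⟩ := h
  exact ⟨a, hS ha, b, hT hb, hab⟩

theorem setAdj_union_left {S' : Set V} : SetAdj G (S ∪ S') T ↔ SetAdj G S T ∨ SetAdj G S' T := by
  simp only [SetAdj, Set.mem_union, or_and_right, exists_or]

theorem SetAdj.of_connected_induce (hS : (G.induce S).Connected) (hT : T ⊂ S)
    (hne : T.Nonempty) : SetAdj G T (S \ T) := by
  obtain ⟨a, ha⟩ := hne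
  obtain ⟨b, hb, hbT⟩ := Set.exists_of_ssubset hT
  obtain ⟨walk⟩ := hS.preconnected ⟨a, hT.subset ha⟩ ⟨b, hb⟩
  obtain ⟨d, -, hfst, hsnd⟩ := walk.exists_boundary_dart (Subtype.val ⁻¹' T) ha hbT
  exact ⟨d.fst, hfst, d.snd, ⟨d.snd.2, hsnd⟩, d.adj⟩

theorem SetAdj.of_connected_induce_union (hST : (G.induce (S ∪ T)).Connected)
    (hdisj : Disjoint S T) (hS : S.Nonempty) (hT : T.Nonempty) : SetAdj G S T := by
  have hdiff : (S ∪ T) \ S = T := by rw [Set.union_sdiff_left, hdisj.symm.sdiff_eq_left]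
  have hss : S ⊂ S ∪ T := by
    refine Set.ssubset_iff_subset_ne.2 ⟨Set.subset_union_left, fun h => ?_⟩
    rw [← h, Set.sdiff_self] at hdiff
    exact hT.ne_empty hdiff.symm
  simpa only [hdiff] using SetAdj.of_connected_induce hST hss hS

/-- `T` is the vertex set of a connected component of the subgraph of `G` induced by `F`. -/
structure IsComponentOn (G : SimpleGraph V) (F T : Set V) : Prop where
  subset : T ⊆ F
  connected : (G.induce T).Connected
  mem_of_adj : ∀ t ∈ T, ∀ u ∈ F, G.Adj t u → u ∈ T

theorem exists_isComponentOn (G : SimpleGraph V) (ha : a ∈ F) :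
    ∃ T, IsComponentOn G F T ∧ a ∈ T := by
  let C := (G.induce F).connectedComponentMk ⟨a, ha⟩
  refine ⟨Subtype.val '' C.supp, ⟨?_, ?_, ?_⟩, ⟨a, ha⟩, rfl, rfl⟩
  · rintro _ ⟨u, -, rfl⟩
    exact u.2
  · refine C.connected_toSimpleGraph.map ⟨fun u => ⟨u.1.1, u.1, u.2, rfl⟩, fun h => h⟩ ?_
    rintro ⟨_, u, hu, rfl⟩
    exact ⟨⟨u, hu⟩, rfl⟩
  · rintro _ ⟨u, hu, rfl⟩ w hw huw
    exact ⟨⟨w, hw⟩, C.mem_supp_of_adj_mem_supp hu huw, rfl⟩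

theorem connected_induce_of_forall_setAdj (hne : S.Nonempty)
    (h : ∀ T ⊂ S, T.Nonempty → SetAdj G T (S \ T)) : (G.induce S).Connected := by
  obtain ⟨s, hs⟩ := hne
  obtain ⟨T, hT, hsT⟩ := exists_isComponentOn G hs
  obtain rfl | hss := hT.subset.eq_or_ssubset
  · exact hT.connected
  · obtain ⟨t, ht, u, hu, htu⟩ := h T hss ⟨s, hsT⟩
    exact absurd (hT.mem_of_adj t ht u hu.1 htu) hu.2

theorem connected_induce_singleton (G : SimpleGraph V) (a : V) : (G.induce {a}).Connected := by
  rw [induce_singleton_eq_top]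
  exact connected_top

theorem SetAdj.connected_induce_union (h : SetAdj G S T) (hS : (G.induce S).Connected)
    (hT : (G.induce T).Connected) : (G.induce (S ∪ T)).Connected := by
  obtain ⟨a, ha, b, hb, hab⟩ := h
  exact SimpleGraph.connected_induce_union hS.preconnected hT.preconnected ha hb hab

/-- `{A, B}` is a partition of `S` into two sets that induce connected subgraphs of `G`. -/
structure IsConnectedBipartition (G : SimpleGraph V) (S A B : Set V) : Prop where
  union_eq : A ∪ B = S
  disjoint : Disjoint A B
  left : (G.induce A).Connected
  right : (G.induce B).Connected

theorem exists_isConnectedBipartition (hS : (G.induce S).Connected) (hp : p ∈ S) (hq : q ∈ S)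
    (hpq : p ≠ q) : ∃ A B, IsConnectedBipartition G S A B ∧ p ∈ A ∧ q ∈ B := by
  obtain ⟨A, hA, hpA⟩ := exists_isComponentOn G (F := S \ {q}) ⟨hp, hpq⟩
  have hAS : A ⊆ S := hA.subset.trans Set.sdiff_subset
  have hqA : q ∉ A := fun h => (hA.subset h).2 rfl
  refine ⟨A, S \ A, ⟨Set.union_sdiff_cancel hAS, Set.disjoint_sdiff_right, hA.connected, ?_⟩,
    hpA, hq, hqA⟩
  -- A part of `S \ A` without `q` has no neighbour in the component `A`, hence one elsewhere.
  have setAdj_of_notMem : ∀ U ⊆ S \ A, U.Nonempty → q ∉ U → SetAdj G U ((S \ A) \ U) := by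
    intro U hU hUne hqU
    obtain ⟨u, hu, w, ⟨hwS, hwU⟩, huw⟩ :=
      SetAdj.of_connected_induce hS (T := U) ⟨hU.trans Set.sdiff_subset, fun h => hqU (h hq)⟩ hUne
    refine ⟨u, hu, w, ⟨⟨hwS, fun hwA => (hU hu).2 ?_⟩, hwU⟩, huw⟩
    exact hA.mem_of_adj w hwA u ⟨(hU hu).1, ne_of_mem_of_not_mem hu hqU⟩ huw.symm
  refine connected_induce_of_forall_setAdj ⟨q, hq, hqA⟩ fun U hU hUne => ?_
  by_cases hqU : q ∈ U
  · have h := setAdj_of_notMem ((S \ A) \ U) Set.sdiff_subset (Set.sdiff_nonempty.2 hU.2)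
      fun h => h.2 hqU
    rw [sdiff_sdiff_eq_self hU.subset] at h
    exact h.symm
  · exact setAdj_of_notMem U hU.subset hUne hqU

theorem connected_induce_sdiff_singleton (hS : (G.induce S).Connected)
    (ha : (G.neighborSet a ∩ S).Subsingleton) (hne : (S \ {a}).Nonempty) :
    (G.induce (S \ {a})).Connected := by
  refine connected_induce_of_forall_setAdj hne fun U hU hUne => ?_
  by_contra hcut
  have exists_adj_leaf : ∀ U ⊂ S \ {a}, U.Nonempty → ¬ SetAdj G U ((S \ {a}) \ U) →
      ∃ u ∈ U, G.Adj a u := by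
    intro U hU hUne hcut
    obtain ⟨u, hu, w, hw, huw⟩ := SetAdj.of_connected_induce hS (T := U)
      (hU.trans_subset Set.sdiff_subset) hUne
    obtain rfl | hwa := eq_or_ne w a
    · exact ⟨u, hu, huw.symm⟩
    · exact absurd ⟨u, hu, w, ⟨⟨hw.1, hwa⟩, hw.2⟩, huw⟩ hcut
  obtain ⟨u, hu, hau⟩ := exists_adj_leaf U hU hUne hcut
  have hss : (S \ {a}) \ U ⊂ S \ {a} :=
    ⟨Set.sdiff_subset, fun h => (h (hU.subset hu)).2 hu⟩
  obtain ⟨w, hw, haw⟩ := exists_adj_leaf _ hss (Set.sdiff_nonempty.2 hU.2)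
    (by rw [sdiff_sdiff_eq_self hU.subset]; exact fun h => hcut h.symm)
  exact hw.2 (ha ⟨haw, hw.1.1⟩ ⟨hau, (hU.subset hu).1⟩ ▸ hu)

end Connectivity

section Core

variable {V : Type*} {G : SimpleGraph V} {S T : Set V} {y : V}

/-- A nonempty vertex set `S` such that every vertex of the subgraph of `G` induced by `S` has
degree at least two. A finite graph is a forest if and only if it has no core, so cores replace
cycles throughout. -/
structure IsCore (G : SimpleGraph V) (S : Set V) : Prop where
  nonempty : S.Nonempty
  nontrivial : ∀ s ∈ S, (G.neighborSet s ∩ S).Nontrivial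

/-- A vertex `w` and a connected set `P` avoiding `w` in which `w` has at least two neighbours:
a cycle through `w`, up to contracting edges. -/
structure IsRootedCycle (G : SimpleGraph V) (w : V) (P : Set V) : Prop where
  notMem : w ∉ P
  connected : (G.induce P).Connected
  nontrivial : (G.neighborSet w ∩ P).Nontrivial

theorem exists_isCore_of_not_isAcyclic (h : ¬ (G.induce S).IsAcyclic) :
    ∃ C ⊆ S, C.Finite ∧ IsCore G C := by
  simp only [IsAcyclic, not_forall, not_not] at h
  obtain ⟨w, c, hc⟩ := h
  refine ⟨Subtype.val '' {u | u ∈ c.support}, ?_, c.support.finite_toSet.image _,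
    ⟨w, w, c.start_mem_support, rfl⟩, ?_⟩
  · rintro _ ⟨u, -, rfl⟩
    exact u.2
  · rintro _ ⟨u, hu, rfl⟩
    have hcard := hc.ncard_neighborSet_toSubgraph_eq_two hu
    have hnontriv : (c.toSubgraph.neighborSet u).Nontrivial :=
      (Set.one_lt_ncard_iff_nontrivial_and_finite.1 (hcard ▸ one_lt_two)).1
    refine (hnontriv.image Subtype.val_injective).mono ?_
    rintro _ ⟨a, ha, rfl⟩
    exact ⟨ha.adj_sub, a, c.mem_verts_toSubgraph.1 ha.snd_mem, rfl⟩

theorem exists_two_leaves_of_not_isCore (hT : (G.induce T).Connected) (hfin : T.Finite)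
    (hnontriv : T.Nontrivial) (hcore : ∀ C ⊆ T, ¬ IsCore G C) :
    ∃ a ∈ T, ∃ b ∈ T, a ≠ b ∧ (G.neighborSet a ∩ T).Subsingleton ∧
      (G.neighborSet b ∩ T).Subsingleton := by
  classical
  have := hfin.fintype
  have := hnontriv.coe_sort
  have hacyclic : (G.induce T).IsAcyclic := by
    by_contra h
    obtain ⟨C, hC, -, hcoreC⟩ := exists_isCore_of_not_isAcyclic h
    exact hcore C hC hcoreC
  have leaf : ∀ u : T, (G.induce T).degree u = 1 → (G.neighborSet u ∩ T).Subsingleton := by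
    intro u hu c hc d hd
    obtain ⟨w, -, hw⟩ := degree_eq_one_iff_existsUnique_adj.1 hu
    exact congrArg Subtype.val ((hw ⟨c, hc.2⟩ hc.1).trans (hw ⟨d, hd.2⟩ hd.1).symm)
  obtain ⟨a, b, hab, ha, hb⟩ := IsTree.exists_ne_and_degree_eq_one ⟨hT, hacyclic⟩
  exact ⟨a, a.2, b, b.2, Subtype.coe_ne_coe.2 hab, leaf a ha, leaf b hb⟩

theorem IsCore.exists_isRootedCycle_at (hS : IsCore G S) (hfin : S.Finite) (hy : y ∈ S)
    (hcore : ∀ C ⊆ S \ {y}, ¬ IsCore G C) : ∃ P ⊆ S \ {y}, IsRootedCycle G y P := by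
  obtain ⟨a, ⟨hya, haS⟩⟩ := (hS.nontrivial y hy).nonempty
  obtain ⟨T, hT, haT⟩ := exists_isComponentOn G (F := S \ {y}) ⟨haS, Adj.ne' hya⟩
  have hyT : y ∉ T := fun h => (hT.subset h).2 rfl
  refine ⟨T, hT.subset, hyT, hT.connected, ?_⟩
  have adj_of_leaf : ∀ t ∈ T, (G.neighborSet t ∩ T).Subsingleton → G.Adj y t := by
    intro t ht hleaf
    by_contra hyt
    refine (hS.nontrivial t (hT.subset ht).1).not_subsingleton (hleaf.anti fun u hu => ?_)
    exact ⟨hu.1, hT.mem_of_adj t ht u ⟨hu.2, fun h => hyt (h ▸ Adj.symm hu.1)⟩ hu.1⟩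
  have hTnontriv : T.Nontrivial := by
    obtain ⟨u, ⟨hau, huS⟩, huy⟩ := (hS.nontrivial a haS).exists_ne y
    exact ⟨a, haT, u, hT.mem_of_adj a haT u ⟨huS, huy⟩ hau, Adj.ne hau⟩
  obtain ⟨b, hb, c, hc, hbc, hleafb, hleafc⟩ := exists_two_leaves_of_not_isCore hT.connected
    (hfin.subset (hT.subset.trans Set.sdiff_subset)) hTnontriv
    fun C hC => hcore C (hC.trans hT.subset)
  exact ⟨b, ⟨adj_of_leaf b hb hleafb, hb⟩, c, ⟨adj_of_leaf c hc hleafc, hc⟩, hbc⟩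

theorem IsCore.exists_isRootedCycle (hS : IsCore G S) (hfin : S.Finite) :
    ∃ w ∈ S, ∃ P ⊆ S, IsRootedCycle G w P := by
  have hfinite : {C | C ⊆ S ∧ IsCore G C}.Finite := hfin.finite_subsets.subset fun _ hC => hC.1
  obtain ⟨C, ⟨hCS, hC⟩, hmin⟩ := hfinite.exists_minimal ⟨S, le_rfl, hS⟩
  obtain ⟨y, hy⟩ := hC.nonempty
  have hcore : ∀ D ⊆ C \ {y}, ¬ IsCore G D := fun D hD hDcore =>
    (hD (hmin ⟨(hD.trans Set.sdiff_subset).trans hCS, hDcore⟩ (hD.trans Set.sdiff_subset) hy)).2 rfl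
  obtain ⟨P, hP, hcycle⟩ := hC.exists_isRootedCycle_at (hfin.subset hCS) hy hcore
  exact ⟨y, hCS hy, P, (hP.trans Set.sdiff_subset).trans hCS, hcycle⟩

/-- Every core contains `v`. In a finite graph this says that deleting `v` leaves a forest. -/
def IsApex (G : SimpleGraph V) (v : V) : Prop :=
  ∀ ⦃S⦄, IsCore G S → v ∈ S

end Core

section Minor

variable {U V W : Type*} {G : SimpleGraph V} {H : SimpleGraph W} {K : SimpleGraph U}

theorem isMinorModel_of_lt [LinearOrder W] {f : W → Set V} (hconn : ∀ w, (G.induce (f w)).Connected)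
    (hdisj : ∀ w₁ w₂, w₁ < w₂ → Disjoint (f w₁) (f w₂))
    (hadj : ∀ w₁ w₂, w₁ < w₂ → H.Adj w₁ w₂ → SetAdj G (f w₁) (f w₂)) : IsMinorModel H G f := by
  refine ⟨fun w => nonempty_subtype.1 (hconn w).nonempty, hconn, fun w₁ w₂ hne => ?_,
    fun w₁ w₂ hw => ?_⟩
  · exact hne.lt_or_gt.elim (hdisj w₁ w₂) fun h => (hdisj w₂ w₁ h).symm
  · exact hw.ne.lt_or_gt.elim (fun h => hadj w₁ w₂ h hw) fun h => (hadj w₂ w₁ h hw.symm).symm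

theorem connected_induce_biUnion {g : U → Set V} {A : Set U} (hA : (K.induce A).Connected)
    (hg : ∀ u ∈ A, (G.induce (g u)).Connected)
    (hadj : ∀ u ∈ A, ∀ v ∈ A, K.Adj u v → SetAdj G (g u) (g v)) :
    (G.induce (⋃ u ∈ A, g u)).Connected := by
  have hne : ∀ u ∈ A, (g u).Nonempty := fun u hu => nonempty_subtype.1 (hg u hu).nonempty
  obtain ⟨u₀, hu₀⟩ := nonempty_subtype.1 hA.nonempty
  refine connected_induce_of_forall_setAdj
    ((hne u₀ hu₀).mono (Set.subset_biUnion_of_mem hu₀)) fun T hT hTne => ?_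
  by_cases hcut : ∃ u ∈ A, (T ∩ g u).Nonempty ∧ ¬ g u ⊆ T
  · obtain ⟨u, hu, hmeet, hsub⟩ := hcut
    have hss : T ∩ g u ⊂ g u := ⟨Set.inter_subset_right, fun h => hsub fun _ ha => (h ha).1⟩
    refine (SetAdj.of_connected_induce (hg u hu) hss hmeet).mono Set.inter_subset_left ?_
    exact fun a ha => ⟨Set.mem_biUnion hu ha.1, fun haT => ha.2 ⟨haT, ha.1⟩⟩
  · push Not at hcut
    obtain ⟨a, haT⟩ := hTne
    obtain ⟨u, hu, hau⟩ := Set.mem_iUnion₂.1 (hT.subset haT)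
    obtain ⟨b, hb, hbT⟩ := Set.exists_of_ssubset hT
    obtain ⟨v, hv, hbv⟩ := Set.mem_iUnion₂.1 hb
    have hss : {w ∈ A | g w ⊆ T} ⊂ A := ⟨Set.sep_subset _ _, fun h => hbT ((h hv).2 hbv)⟩
    obtain ⟨w₁, ⟨hw₁, hw₁T⟩, w₂, ⟨hw₂, hw₂T⟩, hw⟩ :=
      SetAdj.of_connected_induce hA hss ⟨u, hu, hcut u hu ⟨a, haT, hau⟩⟩
    refine (hadj w₁ hw₁ w₂ hw₂ hw).mono hw₁T fun c hc => ⟨Set.mem_biUnion hw₂ hc, fun hcT => ?_⟩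
    exact hw₂T ⟨hw₂, hcut w₂ hw₂ ⟨c, hcT, hc⟩⟩

theorem IsMinor.trans (hHK : IsMinor H K) (hKG : IsMinor K G) : IsMinor H G := by
  obtain ⟨f, fne, fconn, fdisj, fadj⟩ := hHK
  obtain ⟨g, gne, gconn, gdisj, gadj⟩ := hKG
  refine ⟨fun w => ⋃ u ∈ f w, g u, fun w => ?_, fun w => ?_, fun w₁ w₂ hne => ?_,
    fun w₁ w₂ hw => ?_⟩
  · obtain ⟨u, hu⟩ := fne w
    exact (gne u).mono (Set.subset_biUnion_of_mem hu)
  · exact connected_induce_biUnion (fconn w) (fun u _ => gconn u) fun u _ v _ => gadj u v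
  · simp only [Set.disjoint_iUnion_left, Set.disjoint_iUnion_right]
    exact fun u hu v hv => gdisj v u ((fdisj w₁ w₂ hne).ne_of_mem hv hu)
  · obtain ⟨u, hu, v, hv, huv⟩ := fadj w₁ w₂ hw
    exact SetAdj.mono (Set.subset_biUnion_of_mem hu) (Set.subset_biUnion_of_mem hv) (gadj u v huv)

theorem isMinor_induce (G : SimpleGraph V) (s : Set V) : IsMinor (G.induce s) G :=
  ⟨fun v => {v.1}, fun v => Set.singleton_nonempty v.1, fun v => connected_induce_singleton G v.1,
    fun _ _ hne => Set.disjoint_singleton.2 (Subtype.coe_ne_coe.2 hne),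
    fun v w hvw => ⟨v.1, rfl, w.1, rfl, hvw⟩⟩

/-- Deletes the vertex `x` and joins `y` to `z`. If `y` and `z` are the only neighbours of `x`,
this suppresses the degree-two vertex `x`, i.e. contracts one of its two edges. -/
def suppress (G : SimpleGraph V) (x y z : V) : SimpleGraph ↥({x}ᶜ : Set V) :=
  (G ⊔ edge y z).induce {x}ᶜ

theorem isMinor_suppress {x y z : V} (hxy : G.Adj x y) (hxz : G.Adj x z) :
    IsMinor (suppress G x y z) G := by
  -- The branch set of `y` absorbs `x`; every other vertex is its own branch set.
  refine ⟨fun v => {u | u = v ∨ u = x ∧ v = y}, fun v => ⟨v, Or.inl rfl⟩, fun v => ?_,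
    fun v w hne => ?_, fun v w hvw => ?_⟩
  · by_cases hvy : v.1 = y
    · have hset : {u | u = v.1 ∨ u = x ∧ v.1 = y} = {v.1, x} := by ext; simp [hvy]
      beta_reduce
      rw [hset]
      exact induce_pair_connected_of_adj (hvy ▸ hxy.symm)
    · have hset : {u | u = v.1 ∨ u = x ∧ v.1 = y} = {v.1} := by ext; simp [hvy]
      beta_reduce
      rw [hset]
      exact connected_induce_singleton G v.1
  · rw [Set.disjoint_left]
    rintro u (rfl | ⟨rfl, hvy⟩) (hw | ⟨hw, hwy⟩)
    · exact hne (Subtype.ext hw)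
    · exact v.2 hw
    · exact w.2 hw.symm
    · exact hne (Subtype.ext (hvy.trans hwy.symm))
  · obtain h | h := hvw
    · exact ⟨v, Or.inl rfl, w, Or.inl rfl, h⟩
    · have hedge : (edge y z).Adj v.1 w.1 := h
      obtain ⟨⟨hy, hz⟩ | ⟨hz, hy⟩, -⟩ := (edge_adj ..).1 hedge
      · exact ⟨x, Or.inr ⟨rfl, hy⟩, w, Or.inl rfl, hz.symm ▸ hxz⟩
      · exact ⟨v, Or.inl rfl, x, Or.inr ⟨rfl, hy⟩, hz.symm ▸ hxz.symm⟩

end Minor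

section BranchSets

variable {V : Type*} {G : SimpleGraph V} {A B C D P Q S T : Set V} {u v w x y z : V}

/-- Disjoint vertex sets joined by an edge, as needed for the branch sets of two adjacent vertices
in a minor model. -/
structure IsLinked (G : SimpleGraph V) (S T : Set V) : Prop where
  disjoint : Disjoint S T
  setAdj : SetAdj G S T

theorem IsLinked.symm (h : IsLinked G S T) : IsLinked G T S :=
  ⟨h.disjoint.symm, h.setAdj.symm⟩

theorem isLinked_singleton (h : G.Adj u v) : IsLinked G {u} {v} :=
  ⟨Set.disjoint_singleton.2 h.ne, u, rfl, v, rfl, h⟩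

theorem isLinked_singleton_left (hu : u ∉ T) (hv : v ∈ T) (huv : G.Adj u v) : IsLinked G {u} T :=
  ⟨Set.disjoint_singleton_left.2 hu, u, rfl, v, hv, huv⟩

theorem IsConnectedBipartition.isLinked (h : IsConnectedBipartition G S A B)
    (hS : (G.induce S).Connected) : IsLinked G A B :=
  ⟨h.disjoint, SetAdj.of_connected_induce_union (h.union_eq ▸ hS) h.disjoint
    (nonempty_subtype.1 h.left.nonempty) (nonempty_subtype.1 h.right.nonempty)⟩

theorem isMinor_K4_of_isLinked (hA : (G.induce A).Connected) (hB : (G.induce B).Connected)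
    (hC : (G.induce C).Connected) (hD : (G.induce D).Connected) (hAB : IsLinked G A B)
    (hAC : IsLinked G A C) (hAD : IsLinked G A D) (hBC : IsLinked G B C) (hBD : IsLinked G B D)
    (hCD : IsLinked G C D) : IsMinor K4 G := by
  have hlinked : ∀ i j : Fin 4, i < j → IsLinked G (![A, B, C, D] i) (![A, B, C, D] j) := by
    intro i j hij
    fin_cases i <;> fin_cases j <;> first | assumption | exact absurd hij (by decide)
  refine ⟨![A, B, C, D], isMinorModel_of_lt (fun i => ?_) (fun i j h => (hlinked i j h).disjoint)
    fun i j h _ => (hlinked i j h).setAdj⟩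
  fin_cases i <;> assumption

theorem isMinor_C32_of_isMinorModel_triangle {f g : Fin 3 → Set V}
    (hf : IsMinorModel (⊤ : SimpleGraph (Fin 3)) G f)
    (hg : IsMinorModel (⊤ : SimpleGraph (Fin 3)) G g) (hfg : ∀ i j, Disjoint (f i) (g j)) :
    IsMinor C32 G := by
  obtain ⟨fne, fconn, fdisj, fadj⟩ := hf
  obtain ⟨gne, gconn, gdisj, gadj⟩ := hg
  refine ⟨fun i => ![f, g] i.1 i.2, ?_, ?_, ?_, ?_⟩
  · rintro ⟨i, i'⟩
    fin_cases i
    exacts [fne i', gne i']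
  · rintro ⟨i, i'⟩
    fin_cases i
    exacts [fconn i', gconn i']
  · rintro ⟨i, i'⟩ ⟨j, j'⟩ hne
    fin_cases i <;> fin_cases j
    exacts [fdisj i' j' fun h => hne (h ▸ rfl), hfg i' j', (hfg j' i').symm,
      gdisj i' j' fun h => hne (h ▸ rfl)]
  · rintro ⟨i, i'⟩ ⟨j, j'⟩ ⟨hne, hij⟩
    obtain rfl : i = j := hij.elim id Eq.symm
    have hadj : (⊤ : SimpleGraph (Fin 3)).Adj i' j' := fun h => hne (h ▸ rfl)
    fin_cases i
    exacts [fadj i' j' hadj, gadj i' j' hadj]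

theorem isMinor_graphA_of_triangle (hxy : G.Adj x y) (hxz : G.Adj x z) (hyz : G.Adj y z)
    (hA : (G.induce A).Connected) (hB : (G.induce B).Connected) (hC : (G.induce C).Connected)
    (hx : x ∉ A ∪ (B ∪ C)) (hy : y ∉ A ∪ (B ∪ C)) (hz : z ∉ A ∪ (B ∪ C)) (hBC : Disjoint B C)
    (hAB : IsLinked G A B) (hAC : IsLinked G A C) (hyA : SetAdj G {y} A) (hzA : SetAdj G {z} A)
    (hyB : SetAdj G {y} B) (hzC : SetAdj G {z} C) : IsMinor graphA G := by
  have hdisj : ∀ i j : Fin 6, i < j →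
      Disjoint (![{y}, {x}, {z}, C, A, B] i) (![{y}, {x}, {z}, C, A, B] j) := by
    have hxyz : x ≠ y ∧ x ≠ z ∧ y ≠ z := ⟨hxy.ne, hxz.ne, hyz.ne⟩
    have hABC : Disjoint A B ∧ Disjoint C A ∧ Disjoint C B :=
      ⟨hAB.disjoint, hAC.disjoint.symm, hBC.symm⟩
    intro i j hij
    fin_cases i <;> fin_cases j <;> simp_all [eq_comm]
  refine ⟨![{y}, {x}, {z}, C, A, B], isMinorModel_of_lt (fun i => ?_) hdisj fun i j hij h => ?_⟩
  · fin_cases i <;> first | assumption | exact connected_induce_singleton ..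
  · have hyx : SetAdj G {y} {x} := (isLinked_singleton hxy.symm).setAdj
    have hxz : SetAdj G {x} {z} := (isLinked_singleton hxz).setAdj
    have hyz : SetAdj G {y} {z} := (isLinked_singleton hyz).setAdj
    have hCA : SetAdj G C A := hAC.symm.setAdj
    have hAB : SetAdj G A B := hAB.setAdj
    fin_cases i <;> fin_cases j <;> first
      | assumption
      | exact absurd hij (by decide)
      | (exfalso; revert h; simp [graphA])

theorem IsRootedCycle.exists_isMinorModel_triangle (h : IsRootedCycle G w P) :
    ∃ f : Fin 3 → Set V, IsMinorModel (⊤ : SimpleGraph (Fin 3)) G f ∧ ∀ i, f i ⊆ insert w P := by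
  obtain ⟨p, ⟨hwp, hp⟩, q, ⟨hwq, hq⟩, hpq⟩ := h.nontrivial
  obtain ⟨A, B, hAB, hpA, hqB⟩ := exists_isConnectedBipartition h.connected hp hq hpq
  have hw := h.notMem
  simp only [← hAB.union_eq, Set.mem_union, not_or] at hw
  have hwA := isLinked_singleton_left hw.1 hpA hwp
  have hwB := isLinked_singleton_left hw.2 hqB hwq
  have hAB' := hAB.isLinked h.connected
  have hlinked : ∀ i j : Fin 3, i < j → IsLinked G (![{w}, A, B] i) (![{w}, A, B] j) := by
    intro i j hij
    fin_cases i <;> fin_cases j <;> first | assumption | exact absurd hij (by decide)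
  refine ⟨![{w}, A, B], isMinorModel_of_lt (fun i => ?_) (fun i j h => (hlinked i j h).disjoint)
    fun i j h _ => (hlinked i j h).setAdj, fun i => ?_⟩
  · fin_cases i
    exacts [connected_induce_singleton G w, hAB.left, hAB.right]
  · fin_cases i
    exacts [Set.singleton_subset_iff.2 (Set.mem_insert w P),
      (Set.subset_union_left.trans_eq hAB.union_eq).trans (Set.subset_insert w P),
      (Set.subset_union_right.trans_eq hAB.union_eq).trans (Set.subset_insert w P)]

theorem IsRootedCycle.isMinor_C32 (hP : IsRootedCycle G w P) (hQ : IsRootedCycle G z Q)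
    (hdisj : Disjoint (insert w P) (insert z Q)) : IsMinor C32 G := by
  obtain ⟨f, hf, hfP⟩ := hP.exists_isMinorModel_triangle
  obtain ⟨g, hg, hgQ⟩ := hQ.exists_isMinorModel_triangle
  exact isMinor_C32_of_isMinorModel_triangle hf hg fun i j => hdisj.mono (hfP i) (hgQ j)

theorem isRootedCycle_pair (hxy : G.Adj x y) (hxz : G.Adj x z) (hyz : G.Adj y z) :
    IsRootedCycle G x {y, z} :=
  ⟨by simp [hxy.ne, hxz.ne], induce_pair_connected_of_adj hyz,
    ⟨y, ⟨hxy, by simp⟩, z, ⟨hxz, by simp⟩, hyz.ne⟩⟩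

end BranchSets

section Triangle

variable {V : Type*} {G : SimpleGraph V} {A B P Q T : Set V} {v x y z : V}

theorem isMinor_K4_of_adj_of_isLinked (hyz : G.Adj y z) (hA : (G.induce A).Connected)
    (hB : (G.induce B).Connected) (hAB : IsLinked G A B) (hy : y ∉ A ∪ B) (hz : z ∉ A ∪ B)
    (hyA : SetAdj G {y} A) (hyB : SetAdj G {y} B) (hzA : SetAdj G {z} A) (hzB : SetAdj G {z} B) :
    IsMinor K4 G := by
  simp only [Set.mem_union, not_or, ← Set.disjoint_singleton_left] at hy hz
  exact isMinor_K4_of_isLinked (connected_induce_singleton G y) (connected_induce_singleton G z)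
    hA hB (isLinked_singleton hyz) ⟨hy.1, hyA⟩ ⟨hy.2, hyB⟩ ⟨hz.1, hzA⟩ ⟨hz.2, hzB⟩ hAB

theorem isMinor_K4_or_graphA_of_setAdj_union (hxy : G.Adj x y) (hxz : G.Adj x z)
    (hyz : G.Adj y z) (hP : (G.induce P).Connected) (hQ : (G.induce Q).Connected)
    (hB : (G.induce B).Connected) (hx : x ∉ P ∪ (B ∪ Q)) (hy : y ∉ P ∪ (B ∪ Q))
    (hz : z ∉ P ∪ (B ∪ Q)) (hPB : Disjoint P B) (hQB : Disjoint Q B) (hPQ : IsLinked G P Q)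
    (hPQB : SetAdj G (P ∪ Q) B) (hyP : SetAdj G {y} P) (hyB : SetAdj G {y} B)
    (hzP : SetAdj G {z} P) (hzQ : SetAdj G {z} Q) : IsMinor K4 G ∨ IsMinor graphA G := by
  obtain hPB' | hQB' := setAdj_union_left.1 hPQB
  · exact Or.inr (isMinor_graphA_of_triangle hxy hxz hyz hP hB hQ hx hy hz hQB.symm ⟨hPB, hPB'⟩
      hPQ hyP hzP hyB hzQ)
  · have hPBQ : IsLinked G P (B ∪ Q) := ⟨hPB.union_right hPQ.disjoint,
      hPQ.setAdj.mono subset_rfl Set.subset_union_right⟩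
    exact Or.inl (isMinor_K4_of_adj_of_isLinked hyz hP (hQB'.symm.connected_induce_union hB hQ) hPBQ
      hy hz hyP (hyB.mono subset_rfl Set.subset_union_left) hzP
      (hzQ.mono subset_rfl Set.subset_union_right))

theorem isMinor_K4_or_graphA_of_isLinked (hxy : G.Adj x y) (hxz : G.Adj x z)
    (hyz : G.Adj y z) (hA : (G.induce A).Connected) (hB : (G.induce B).Connected)
    (hAB : IsLinked G A B) (hx : x ∉ A ∪ B) (hy : y ∉ A ∪ B) (hz : z ∉ A ∪ B)
    (hyA : SetAdj G {y} A) (hyB : SetAdj G {y} B) (hzA : (G.neighborSet z ∩ A).Nontrivial) :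
    IsMinor K4 G ∨ IsMinor graphA G := by
  obtain ⟨p, ⟨hzp, hp⟩, q, ⟨hzq, hq⟩, hpq⟩ := hzA
  obtain ⟨P, Q, hPQ, hpP, hqQ⟩ := exists_isConnectedBipartition hA hp hq hpq
  have hPQlink := hPQ.isLinked hA
  have hzP : SetAdj G {z} P := ⟨z, rfl, p, hpP, hzp⟩
  have hzQ : SetAdj G {z} Q := ⟨z, rfl, q, hqQ, hzq⟩
  obtain ⟨hPB, hQB⟩ := Set.disjoint_union_left.1 (hPQ.union_eq ▸ hAB.disjoint)
  have hPQB : SetAdj G (P ∪ Q) B := hPQ.union_eq ▸ hAB.setAdj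
  have hset : P ∪ (B ∪ Q) = A ∪ B := by rw [Set.union_comm B, ← Set.union_assoc, hPQ.union_eq]
  have hset' : Q ∪ (B ∪ P) = A ∪ B := by rw [Set.union_comm B, ← Set.union_assoc, Set.union_comm Q,
    hPQ.union_eq]
  obtain hyP | hyQ := setAdj_union_left.1 (hPQ.union_eq ▸ hyA.symm : SetAdj G (P ∪ Q) {y})
  · exact isMinor_K4_or_graphA_of_setAdj_union hxy hxz hyz hPQ.left hPQ.right hB (hset ▸ hx)
      (hset ▸ hy) (hset ▸ hz) hPB hQB hPQlink hPQB hyP.symm hyB hzP hzQ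
  · exact isMinor_K4_or_graphA_of_setAdj_union hxy hxz hyz hPQ.right hPQ.left hB (hset' ▸ hx)
      (hset' ▸ hy) (hset' ▸ hz) hQB hPB hPQlink.symm (Set.union_comm P Q ▸ hPQB) hyQ.symm hyB
      hzQ hzP

theorem isMinor_K4_or_graphA_of_triangle (hxy : G.Adj x y) (hxz : G.Adj x z) (hyz : G.Adj y z)
    (hxT : x ∉ T) (hy : IsRootedCycle G y T) (hz : IsRootedCycle G z T) :
    IsMinor K4 G ∨ IsMinor graphA G := by
  obtain ⟨p, ⟨hyp, hp⟩, q, ⟨hyq, hq⟩, hpq⟩ := hy.nontrivial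
  obtain ⟨A, B, hAB, hpA, hqB⟩ := exists_isConnectedBipartition hy.connected hp hq hpq
  obtain rfl := hAB.union_eq
  have hABlink := hAB.isLinked hy.connected
  have hyA : SetAdj G {y} A := ⟨y, rfl, p, hpA, hyp⟩
  have hyB : SetAdj G {y} B := ⟨y, rfl, q, hqB, hyq⟩
  by_cases hzA : SetAdj G {z} A
  · by_cases hzB : SetAdj G {z} B
    · exact Or.inl (isMinor_K4_of_adj_of_isLinked hyz hAB.left hAB.right hABlink hy.notMem hz.notMem
        hyA hyB hzA hzB)
    · refine isMinor_K4_or_graphA_of_isLinked hxy hxz hyz hAB.left hAB.right hABlink hxT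
        hy.notMem hz.notMem hyA hyB (hz.nontrivial.mono ?_)
      exact fun u ⟨hzu, hu⟩ => ⟨hzu, hu.resolve_right fun huB => hzB ⟨z, rfl, u, huB, hzu⟩⟩
  · rw [Set.union_comm] at hxT hy hz
    refine isMinor_K4_or_graphA_of_isLinked hxy hxz hyz hAB.right hAB.left hABlink.symm hxT
      hy.notMem hz.notMem hyB hyA (hz.nontrivial.mono ?_)
    exact fun u ⟨hzu, hu⟩ => ⟨hzu, hu.resolve_right fun huA => hzA ⟨z, rfl, u, huA, hzu⟩⟩

theorem exists_isRootedCycle_of_not_isApex [Finite V] (hxy : G.Adj x y) (hxz : G.Adj x z)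
    (hyz : G.Adj y z) (hx : G.neighborSet x ⊆ {y, z}) (hC : ¬ IsMinor C32 G)
    (hz : ¬ IsApex G z) : ∃ P, IsRootedCycle G y P ∧ x ∉ P ∧ z ∉ P := by
  simp only [IsApex, not_forall] at hz
  obtain ⟨S, hS, hzS⟩ := hz
  have hxS : x ∉ S := fun hxS => by
    refine (hS.nontrivial x hxS).not_subsingleton (Set.subsingleton_singleton (a := y) |>.anti ?_)
    exact fun u ⟨hxu, hu⟩ => (hx hxu).resolve_right fun huz => hzS (huz ▸ hu)
  -- A core avoiding the triangle would give a second cycle, hence two disjoint ones.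
  have hcore : ∀ C ⊆ S \ {y}, ¬ IsCore G C := fun C hCS hC' => by
    obtain ⟨w, hw, P, hP, hcycle⟩ := hC'.exists_isRootedCycle C.toFinite
    refine hC ((isRootedCycle_pair hxy hxz hyz).isMinor_C32 hcycle ?_)
    refine Set.disjoint_left.2 fun u hu huP => ?_
    have huS := hCS (Set.insert_subset hw hP huP)
    obtain rfl | rfl | rfl := hu
    exacts [hxS huS.1, huS.2 rfl, hzS huS.1]
  have hyS : y ∈ S := by
    by_contra hyS
    exact hcore S (Set.subset_sdiff_singleton le_rfl hyS) hS
  obtain ⟨P, hP, hcycle⟩ := hS.exists_isRootedCycle_at S.toFinite hyS hcore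
  exact ⟨P, hcycle, fun h => hxS (hP h).1, fun h => hzS (hP h).1⟩

theorem isApex_or_isApex_of_triangle [Finite V] (hxy : G.Adj x y) (hxz : G.Adj x z)
    (hyz : G.Adj y z) (hx : G.neighborSet x ⊆ {y, z}) (h4 : ¬ IsMinor K4 G)
    (hC : ¬ IsMinor C32 G) (hA : ¬ IsMinor graphA G) : IsApex G y ∨ IsApex G z := by
  by_contra! ⟨hy, hz⟩
  obtain ⟨P, hP, hxP, hzP⟩ := exists_isRootedCycle_of_not_isApex hxy hxz hyz hx hC hz
  obtain ⟨Q, hQ, hxQ, hyQ⟩ :=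
    exists_isRootedCycle_of_not_isApex hxz hxy hyz.symm (Set.pair_comm y z ▸ hx) hC hy
  by_cases hPQ : (P ∩ Q).Nonempty
  · have hconn : (G.induce (P ∪ Q)).Connected :=
      induce_union_connected hP.connected.preconnected hQ.connected.preconnected hPQ
    have hyT : IsRootedCycle G y (P ∪ Q) := ⟨by simp [hP.notMem, hyQ], hconn,
      hP.nontrivial.mono (Set.inter_subset_inter_right _ Set.subset_union_left)⟩
    have hzT : IsRootedCycle G z (P ∪ Q) := ⟨by simp [hQ.notMem, hzP], hconn,
      hQ.nontrivial.mono (Set.inter_subset_inter_right _ Set.subset_union_right)⟩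
    exact (isMinor_K4_or_graphA_of_triangle hxy hxz hyz (by simp [hxP, hxQ]) hyT hzT).elim h4 hA
  · have hdisj : Disjoint P Q := Set.disjoint_iff_inter_eq_empty.2
      (Set.not_nonempty_iff_eq_empty.1 hPQ)
    exact hC (hP.isMinor_C32 hQ (by simp [hyz.ne', hyQ, hzP, hdisj]))

end Triangle

section MinDegree

variable {V : Type*} {G : SimpleGraph V} {F L M T : Set V} {a b c t u v x : V}

theorem IsComponentOn.neighborSet_inter (hT : IsComponentOn G F T) (ht : t ∈ T) :
    G.neighborSet t ∩ F = G.neighborSet t ∩ T :=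
  Set.Subset.antisymm (fun u ⟨htu, hu⟩ => ⟨htu, hT.mem_of_adj t ht u hu htu⟩)
    (Set.inter_subset_inter_right _ hT.subset)

theorem IsComponentOn.neighborSet_inter_sdiff (hT : IsComponentOn G F T) (hc : c ∈ F \ T) :
    G.neighborSet c ∩ F = G.neighborSet c ∩ (F \ T) :=
  Set.Subset.antisymm
    (fun u ⟨hcu, hu⟩ => ⟨hcu, hu, fun huT => hc.2 (hT.mem_of_adj u huT c hc.1 (Adj.symm hcu))⟩)
    (Set.inter_subset_inter_right _ Set.sdiff_subset)

theorem adj_of_subsingleton_neighborSet_inter (hdeg : ∀ p q, ¬ G.neighborSet c ⊆ {p, q})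
    (hc : (G.neighborSet c ∩ {x, v}ᶜ).Subsingleton) :
    G.Adj c x ∧ G.Adj c v ∧ ∃ u ∉ ({x, v} : Set V), G.Adj c u := by
  obtain ⟨u, hcu, hu⟩ := Set.not_subset.1 (hdeg x v)
  have hnbr : ∀ w, G.Adj c w → w = x ∨ w = v ∨ w = u := by
    intro w hcw
    by_cases hw : w ∈ ({x, v} : Set V)
    · exact hw.imp_right Or.inl
    · exact Or.inr (Or.inr (hc ⟨hcw, hw⟩ ⟨hcu, hu⟩))
  refine ⟨?_, ?_, u, hu, hcu⟩
  · obtain ⟨w, hcw, hw⟩ := Set.not_subset.1 (hdeg v u)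
    exact ((hnbr w hcw).resolve_right hw) ▸ hcw
  · obtain ⟨w, hcw, hw⟩ := Set.not_subset.1 (hdeg x u)
    simp only [Set.mem_insert_iff, Set.mem_singleton_iff, not_or] at hw
    exact (((hnbr w hcw).resolve_left hw.1).resolve_right hw.2) ▸ hcw

theorem isMinor_K4_of_isLinked_of_setAdj (hT : (G.induce T).Connected) (ha : a ∈ T) (hb : b ∈ T)
    (hab : a ≠ b) (hL : (G.induce L).Connected) (hM : (G.induce M).Connected)
    (hLM : IsLinked G L M) (hLT : Disjoint L T) (hMT : Disjoint M T) (hLa : SetAdj G L {a})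
    (hLb : SetAdj G L {b}) (hMa : SetAdj G M {a}) (hMb : SetAdj G M {b}) : IsMinor K4 G := by
  obtain ⟨A, B, hAB, haA, hbB⟩ := exists_isConnectedBipartition hT ha hb hab
  obtain rfl := hAB.union_eq
  rw [Set.disjoint_union_right] at hLT hMT
  have haA := Set.singleton_subset_iff.2 haA
  have hbB := Set.singleton_subset_iff.2 hbB
  exact isMinor_K4_of_isLinked hL hM hAB.left hAB.right hLM
    ⟨hLT.1, hLa.mono le_rfl haA⟩ ⟨hLT.2, hLb.mono le_rfl hbB⟩
    ⟨hMT.1, hMa.mono le_rfl haA⟩ ⟨hMT.2, hMb.mono le_rfl hbB⟩ (hAB.isLinked hT)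

theorem isMinor_K4_of_adj_two_leaves (hT : (G.induce T).Connected) (ha : a ∈ T) (hb : b ∈ T)
    (hab : a ≠ b) (haT : (G.neighborSet a ∩ T).Subsingleton)
    (hbT : (G.neighborSet b ∩ T).Subsingleton) (hx : x ∉ T) (hv : v ∉ T) (hxv : x ≠ v)
    (hax : G.Adj a x) (hav : G.Adj a v) (hbx : G.Adj b x) (hbv : G.Adj b v) (hu : u ∈ T)
    (hua : u ≠ a) (hub : u ≠ b) (hvu : G.Adj v u) : IsMinor K4 G := by
  have hTa : (G.induce (T \ {a})).Connected := connected_induce_sdiff_singleton hT haT ⟨u, hu, hua⟩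
  have hTb : (G.induce (T \ {b})).Connected := connected_induce_sdiff_singleton hT hbT ⟨u, hu, hub⟩
  have hR : (G.induce ((T \ {a}) \ {b})).Connected := connected_induce_sdiff_singleton hTa
    (hbT.anti (Set.inter_subset_inter_right _ Set.sdiff_subset)) ⟨u, ⟨hu, hua⟩, hub⟩
  have hbR : SetAdj G {b} ((T \ {a}) \ {b}) := SetAdj.of_connected_induce hTa
    ⟨Set.singleton_subset_iff.2 ⟨hb, hab.symm⟩, fun h => hub (h ⟨hu, hua⟩)⟩
    (Set.singleton_nonempty b)
  have haR : SetAdj G {a} ((T \ {a}) \ {b}) := sdiff_sdiff_comm (a := T) ▸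
    SetAdj.of_connected_induce hTb
      ⟨Set.singleton_subset_iff.2 ⟨ha, hab⟩, fun h => hua (h ⟨hu, hub⟩)⟩ (Set.singleton_nonempty a)
  have hRT : (T \ {a}) \ {b} ⊆ T := Set.sdiff_subset.trans Set.sdiff_subset
  refine isMinor_K4_of_isLinked (A := {x, a}) (B := {v}) (C := {b})
    (induce_pair_connected_of_adj hax.symm) (connected_induce_singleton G v)
    (connected_induce_singleton G b) hR ⟨?_, a, by simp, v, rfl, hav⟩
    ⟨?_, x, by simp, b, rfl, hbx.symm⟩ ⟨?_, haR.mono (by simp) le_rfl⟩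
    (isLinked_singleton hbv.symm)
    (isLinked_singleton_left (fun h => hv (hRT h)) ⟨⟨hu, hua⟩, hub⟩ hvu)
    ⟨by simp, hbR⟩
  · simp [hxv.symm, hav.ne']
  · simp [hbx.ne, hab.symm]
  · simp [hx]

theorem exists_subsingleton_neighborSet_inter (hne : F.Nonempty)
    (hcore : ∀ C ⊆ F, ¬ IsCore G C) : ∃ a ∈ F, (G.neighborSet a ∩ F).Subsingleton := by
  by_contra! h
  exact hcore F le_rfl ⟨hne, h⟩

theorem exists_isComponentOn_two_leaves [Finite V] (hdeg : ∀ s p q, ¬ G.neighborSet s ⊆ {p, q})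
    (hcore : ∀ C ⊆ {x, v}ᶜ, ¬ IsCore G C) : ∃ T, IsComponentOn G {x, v}ᶜ T ∧
      ∃ a ∈ T, ∃ b ∈ T, a ≠ b ∧ (G.neighborSet a ∩ T).Subsingleton ∧
        (G.neighborSet b ∩ T).Subsingleton := by
  obtain ⟨s, -, hs⟩ := Set.not_subset.1 (hdeg x x v)
  obtain ⟨c, hc, hleaf⟩ := exists_subsingleton_neighborSet_inter ⟨s, hs⟩ hcore
  obtain ⟨-, -, d, hd, hcd⟩ := adj_of_subsingleton_neighborSet_inter (hdeg c) hleaf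
  obtain ⟨T, hT, hcT⟩ := exists_isComponentOn G hc
  have hnontriv : T.Nontrivial := ⟨c, hcT, d, hT.mem_of_adj c hcT d hd hcd, hcd.ne⟩
  exact ⟨T, hT, exists_two_leaves_of_not_isCore hT.connected T.toFinite hnontriv
    fun C hC => hcore C (hC.trans hT.subset)⟩

theorem isMinor_K4_of_forall_not_isCore [Finite V] (hdeg : ∀ s p q, ¬ G.neighborSet s ⊆ {p, q})
    (hxv : x ≠ v) (hcore : ∀ C ⊆ {x, v}ᶜ, ¬ IsCore G C) : IsMinor K4 G := by
  obtain ⟨T, hT, a, ha, b, hb, hab, haT, hbT⟩ := exists_isComponentOn_two_leaves hdeg hcore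
  obtain ⟨hax, hav, -⟩ :=
    adj_of_subsingleton_neighborSet_inter (hdeg a) (hT.neighborSet_inter ha ▸ haT)
  obtain ⟨hbx, hbv, -⟩ :=
    adj_of_subsingleton_neighborSet_inter (hdeg b) (hT.neighborSet_inter hb ▸ hbT)
  have hxT : x ∉ T := fun h => hT.subset h (by simp)
  have hvT : v ∉ T := fun h => hT.subset h (by simp)
  have hlink : ∀ L : Set V, (G.induce L).Connected → x ∈ L → Disjoint L T → IsLinked G L {v} →
      IsMinor K4 G := fun L hL hxL hLT hLv =>
    isMinor_K4_of_isLinked_of_setAdj hT.connected ha hb hab hL (connected_induce_singleton G v) hLv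
      hLT (Set.disjoint_singleton_left.2 hvT) ⟨x, hxL, a, rfl, hax.symm⟩ ⟨x, hxL, b, rfl, hbx.symm⟩
      ⟨v, rfl, a, rfl, hav.symm⟩ ⟨v, rfl, b, rfl, hbv.symm⟩
  obtain ⟨u, hvu, hu⟩ := Set.not_subset.1 (hdeg v a b)
  simp only [Set.mem_insert_iff, Set.mem_singleton_iff, not_or] at hu
  by_cases hux : u = x
  · subst hux
    exact hlink {u} (connected_induce_singleton G u) rfl (Set.disjoint_singleton_left.2 hxT)
      (isLinked_singleton (Adj.symm hvu))
  by_cases huT : u ∈ T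
  · exact isMinor_K4_of_adj_two_leaves hT.connected ha hb hab haT hbT hxT hvT hxv hax hav hbx hbv
      huT hu.1 hu.2 hvu
  · have huF : u ∈ ({x, v}ᶜ : Set V) := by simp [hux, Adj.ne' hvu]
    obtain ⟨c, hc, hleaf⟩ := exists_subsingleton_neighborSet_inter
      (F := {x, v}ᶜ \ T) ⟨u, huF, huT⟩ fun C hC => hcore C (hC.trans Set.sdiff_subset)
    obtain ⟨hcx, hcv, -⟩ :=
      adj_of_subsingleton_neighborSet_inter (hdeg c) (hT.neighborSet_inter_sdiff hc ▸ hleaf)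
    exact hlink {x, c} (induce_pair_connected_of_adj hcx.symm) (by simp) (by simp [hxT, hc.2])
      ⟨by simp [hxv.symm, hcv.ne'], c, by simp, v, rfl, hcv⟩

end MinDegree

section Apex

variable {V W : Type*} {G : SimpleGraph V} {H : SimpleGraph W} {S s : Set V} {x y z : V}

theorem ne_and_eq_pair_of_nontrivial (hS : S.Nontrivial) (h : S ⊆ {y, z}) :
    y ≠ z ∧ S = {y, z} := by
  obtain rfl | rfl | rfl | rfl := Set.subset_pair_iff_eq.1 h
  · exact absurd hS Set.not_nontrivial_empty
  · exact absurd hS Set.not_nontrivial_singleton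
  · exact absurd hS Set.not_nontrivial_singleton
  · exact ⟨fun hyz => by simp [hyz] at hS, rfl⟩

/-- `G` has none of the three excluded minors. -/
structure IsObstructionFree (G : SimpleGraph V) : Prop where
  not_K4 : ¬ IsMinor K4 G
  not_C32 : ¬ IsMinor C32 G
  not_graphA : ¬ IsMinor graphA G

theorem IsObstructionFree.of_isMinor (hG : IsObstructionFree G) (h : IsMinor H G) :
    IsObstructionFree H :=
  ⟨fun h' => hG.not_K4 (h'.trans h), fun h' => hG.not_C32 (h'.trans h),
    fun h' => hG.not_graphA (h'.trans h)⟩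

theorem IsCore.mono {G' : SimpleGraph V} (hS : IsCore G S) (h : G ≤ G') : IsCore G' S :=
  ⟨hS.nonempty, fun u hu => (hS.nontrivial u hu).mono fun _ hw => ⟨h hw.1, hw.2⟩⟩

theorem IsCore.induce (hS : IsCore G S) (h : S ⊆ s) :
    IsCore (G.induce s) (Subtype.val ⁻¹' S) := by
  obtain ⟨a, ha⟩ := hS.nonempty
  refine ⟨⟨⟨a, h ha⟩, ha⟩, fun u hu => ?_⟩
  obtain ⟨p, ⟨hup, hp⟩, q, ⟨huq, hq⟩, hpq⟩ := hS.nontrivial u.1 hu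
  exact ⟨⟨p, h hp⟩, ⟨hup, hp⟩, ⟨q, h hq⟩, ⟨huq, hq⟩, fun h => hpq (congrArg Subtype.val h)⟩

theorem IsApex.of_induce {v : s} (hv : IsApex (G.induce s) v) (hs : ∀ ⦃S⦄, IsCore G S → S ⊆ s) :
    IsApex G v :=
  fun _ hS => hv (hS.induce (hs hS))

theorem IsCore.nontrivial_neighborSet_sup_edge (hS : IsCore G S) (hy : y ∈ S) (hz : z ∈ S)
    (hzx : z ≠ x) (hyz : y ≠ z) (hadj : ¬ G.Adj y z) :
    ((G ⊔ edge y z).neighborSet y ∩ (S \ {x})).Nontrivial := by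
  obtain ⟨b, ⟨hyb, hb⟩, hbx⟩ := (hS.nontrivial y hy).exists_ne x
  refine ⟨z, ⟨Or.inr ((edge_adj ..).2 ⟨Or.inl ⟨rfl, rfl⟩, hyz⟩), hz, hzx⟩, b,
    ⟨Or.inl hyb, hb, hbx⟩, ?_⟩
  rintro rfl
  exact hadj hyb

theorem IsCore.sdiff_singleton_sup_edge (hS : IsCore G S) (hx : G.neighborSet x ⊆ {y, z})
    (hadj : ¬ G.Adj y z) : IsCore (G ⊔ edge y z) (S \ {x}) := by
  by_cases hxS : x ∈ S
  · obtain ⟨hyz, hnbr⟩ := ne_and_eq_pair_of_nontrivial (hS.nontrivial x hxS)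
      (Set.inter_subset_left.trans hx)
    obtain ⟨hxy, hyS⟩ : y ∈ G.neighborSet x ∩ S := hnbr ▸ Or.inl rfl
    obtain ⟨hxz, hzS⟩ : z ∈ G.neighborSet x ∩ S := hnbr ▸ Or.inr rfl
    refine ⟨⟨y, hyS, Adj.ne' hxy⟩, fun u ⟨hu, hux⟩ => ?_⟩
    by_cases hxu : G.Adj x u
    · obtain rfl | rfl := hx hxu
      · exact hS.nontrivial_neighborSet_sup_edge hu hzS (Adj.ne' hxz) hyz hadj
      · rw [edge_comm]
        exact hS.nontrivial_neighborSet_sup_edge hu hyS (Adj.ne' hxy) hyz.symm fun h => hadj h.symm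
    · refine (hS.nontrivial u hu).mono fun w ⟨huw, hw⟩ => ⟨Or.inl huw, hw, ?_⟩
      rintro rfl
      exact hxu (Adj.symm huw)
  · rw [Set.sdiff_singleton_eq_self hxS]
    exact hS.mono le_sup_left

theorem IsApex.of_suppress {v : ↥({x}ᶜ : Set V)} (hv : IsApex (suppress G x y z) v)
    (hx : G.neighborSet x ⊆ {y, z}) (hadj : ¬ G.Adj y z) : IsApex G v := fun _ hS =>
  (hv ((hS.sdiff_singleton_sup_edge hx hadj).induce fun _ hu => hu.2)).1

theorem exists_isApex_of_compl_singleton [Finite V] [Nonempty V] (hG : IsObstructionFree G)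
    (ih : ∀ (x : V) (G' : SimpleGraph ↥({x}ᶜ : Set V)), IsObstructionFree G' →
      ∃ v, IsApex G' v) : ∃ v, IsApex G v := by
  by_cases hdeg : ∃ x y z, G.neighborSet x ⊆ {y, z}
  · obtain ⟨x, y, z, hx⟩ := hdeg
    by_cases hnontriv : (G.neighborSet x).Nontrivial
    · obtain ⟨-, hnbr⟩ := ne_and_eq_pair_of_nontrivial hnontriv hx
      have hxy : y ∈ G.neighborSet x := hnbr ▸ Or.inl rfl
      have hxz : z ∈ G.neighborSet x := hnbr ▸ Or.inr rfl
      by_cases hadj : G.Adj y z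
      · exact (isApex_or_isApex_of_triangle hxy hxz hadj hx hG.not_K4 hG.not_C32
          hG.not_graphA).elim (fun h => ⟨y, h⟩) fun h => ⟨z, h⟩
      · obtain ⟨v, hv⟩ := ih x _ (hG.of_isMinor (isMinor_suppress hxy hxz))
        exact ⟨v, hv.of_suppress hx hadj⟩
    · obtain ⟨v, hv⟩ := ih x _ (hG.of_isMinor (isMinor_induce G {x}ᶜ))
      refine ⟨v, hv.of_induce fun S hS u hu hux => hnontriv ?_⟩
      exact hux ▸ (hS.nontrivial u hu).mono Set.inter_subset_left
  · push Not at hdeg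
    obtain ⟨x⟩ := ‹Nonempty V›
    obtain ⟨v, hv⟩ := ih x _ (hG.of_isMinor (isMinor_induce G {x}ᶜ))
    refine absurd (isMinor_K4_of_forall_not_isCore hdeg (Ne.symm v.2) fun C hC hcore => ?_)
      hG.not_K4
    exact hC (hv (hcore.induce fun u hu hux => hC hu (Or.inl hux))) (Or.inr rfl)

theorem exists_isApex {V : Type*} {G : SimpleGraph V} [Finite V] [Nonempty V]
    (hG : IsObstructionFree G) : ∃ v, IsApex G v := by
  obtain _ | _ := subsingleton_or_nontrivial V
  · obtain ⟨v⟩ := ‹Nonempty V›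
    exact ⟨v, fun S ⟨⟨s, hs⟩, _⟩ => Subsingleton.elim s v ▸ hs⟩
  · refine exists_isApex_of_compl_singleton hG fun x G' hG' => ?_
    have : Nonempty ↥({x}ᶜ : Set V) := nonempty_subtype.2 (exists_ne x)
    exact exists_isApex hG'
termination_by Nat.card V
decreasing_by exact Finite.card_subtype_lt (x := x) (by simp)

end Apex

theorem near_forest_of_no_K4_C32_A_minor_general {V : Type*} [Nonempty V] (H : SimpleGraph V)
    (h4 : ¬ IsMinor K4 H) (hC : ¬ IsMinor C32 H) (hA : ¬ IsMinor graphA H) :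
    ∃ v : V, (H.induce {u | u ≠ v}).IsAcyclic := by
  by_contra! hcyc
  have hcore : ∀ v, ∃ C, C.Finite ∧ IsCore H C ∧ v ∉ C := fun v => by
    obtain ⟨C, hCv, hfin, hC⟩ := exists_isCore_of_not_isAcyclic (hcyc v)
    exact ⟨C, hfin, hC, fun hv => hCv hv rfl⟩
  choose D hfin hD hvD using hcore
  let r : V := Classical.arbitrary V
  let X : Set V := D r ∪ ⋃ v ∈ D r, D v
  have hX : X.Finite := (hfin r).union ((hfin r).biUnion fun v _ => hfin v)
  have : Finite X := hX.to_subtype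
  have : Nonempty X := ((hD r).nonempty.mono Set.subset_union_left).to_subtype
  obtain ⟨v, hv⟩ := exists_isApex
    ((IsObstructionFree.mk h4 hC hA).of_isMinor (isMinor_induce H X))
  have hvr : v.1 ∈ D r := hv ((hD r).induce Set.subset_union_left)
  refine hvD v (hv ((hD v).induce ?_))
  exact (Set.subset_biUnion_of_mem (u := D) hvr).trans Set.subset_union_right

/-- Lemma 2.1. If a graph `H` has no `K₄`, `C_{3,2}` or `A` minor, then
`H` has a vertex `v` such that `H \ v` is a forest. -/
theorem near_forest_of_no_K4_C32_A_minor {V : Type} [Fintype V] [Nonempty V]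
    (H : SimpleGraph V) (h4 : ¬ IsMinor K4 H) (hC : ¬ IsMinor C32 H)
    (hA : ¬ IsMinor graphA H) :
    ∃ v : V, (H.induce {u | u ≠ v}).IsAcyclic :=
  near_forest_of_no_K4_C32_A_minor_general H h4 hC hA
end

section
/- If a graph H has a vertex v such that H∖v is a forest, then there exists a positive integer k such that H is isomorphic to a minor of 𝒫_k. -/
/-!
Common definitions: minors, widths, connectivity, the specific graphs
`K4`, `K23`, `C32`, `graphA`, the binary trees `CT_h`, the graphs `𝒫_k`, `𝒬_k`,
the trees `T_h`, homeomorphic embeddings, cascades, and related notions,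
following Dang--Thomas, "Minors of two-connected graphs of large path-width".
-/

open SimpleGraph

/-!
Let `F` be the forest `H \ v`. Since every branch set that meets the leaves of `CT_k` sees the extra
vertex of `𝒫_k`, it is enough to find a minor model of `F` in `CT_k` each of whose branch sets
contains a leaf; then `v` is modelled by the extra vertex. Such a model is built one vertex at a
time. A finite forest has a vertex `u` with at most one neighbour `p`. Given a model of `F \ u` in
`CT_k`, pass to `CT_{k+1}`: every leaf of `CT_k` keeps its branch set and hands it down to its
children, except that below one leaf `τ` of the branch set of `p` one child is given to `u`.
-/

theorem IsMinor.of_isContained {U W V : Type*} {H : SimpleGraph U} {H' : SimpleGraph W}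
    {G : SimpleGraph V} (hG : IsMinor H' G) (hH : H ⊑ H') : IsMinor H G := by
  obtain ⟨f, hne, hconn, hdisj, hadj⟩ := hG
  obtain ⟨e⟩ := hH
  exact ⟨f ∘ e, fun u => hne (e u), fun u => hconn (e u),
    fun u₁ u₂ h => hdisj _ _ (e.injective.ne h), fun u₁ u₂ h => hadj _ _ (e.toHom.map_adj h)⟩

/-- The cone over `F`: the graph obtained from `F` by adding a vertex `none` adjacent to every
vertex of `F`. -/
def cone {W : Type*} (F : SimpleGraph W) : SimpleGraph (Option W) where
  Adj
    | none, none => False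
    | none, some _ => True
    | some _, none => True
    | some a, some b => F.Adj a b
  symm := ⟨by rintro (_ | a) (_ | b) h; exacts [h, h, h, F.adj_symm h]⟩
  loopless := ⟨by rintro (_ | a) h; exacts [h, F.irrefl h]⟩

theorem isContained_cone_induce_ne {V : Type*} (H : SimpleGraph V) (v : V) :
    H ⊑ cone (H.induce {u | u ≠ v}) := by
  classical
  let e : V ≃ Option {u // u ≠ v} := (Equiv.optionSubtypeNe v).symm
  refine ⟨⟨⟨e, fun {a b} hab => ?_⟩, e.injective⟩⟩
  by_cases ha : a = v <;> by_cases hb : b = v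
  · exact absurd (ha.trans hb.symm) hab.ne
  · simp [e, ha, hb, cone]
  · simp [e, ha, hb, cone]
  · simpa [e, ha, hb, cone] using hab

section Forest

variable {W : Type*} {F : SimpleGraph W}

theorem exists_neighborSet_subsingleton_of_isAcyclic [Nonempty W] [Finite F.edgeSet]
    (hF : F.IsAcyclic) : ∃ u, (F.neighborSet u).Subsingleton := by
  obtain ⟨u, w, p, hp, hmax⟩ :=
    Walk.exists_isPath_forall_isPath_length_le_length F
  have mem_support : ∀ a, F.Adj u a → a ∈ p.support := by
    intro a ha
    by_contra hap
    have hlong := hmax _ _ _ (hp.cons (h := ha.symm) hap)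
    simp at hlong
  exact ⟨u, fun a ha b hb => (hF.eq_snd_of_adj_start hp ha (mem_support a ha)).trans
    (hF.eq_snd_of_adj_start hp hb (mem_support b hb)).symm⟩

theorem exists_neighborSet_inter_subsingleton_of_isAcyclic (hF : F.IsAcyclic) {S : Set W}
    (hS : S.Finite) (hne : S.Nonempty) : ∃ u ∈ S, (F.neighborSet u ∩ S).Subsingleton := by
  have := hS.to_subtype
  have := hne.to_subtype
  obtain ⟨u, hu⟩ := exists_neighborSet_subsingleton_of_isAcyclic (hF.induce S)
  exact ⟨u, u.2, fun a ha b hb =>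
    congrArg Subtype.val (hu (x := ⟨a, ha.2⟩) ha.1 (y := ⟨b, hb.2⟩) hb.1)⟩

theorem isAcyclic_induction_on {P : Set W → Prop} (hF : F.IsAcyclic) {S : Set W} (hS : S.Finite)
    (empty : P ∅)
    (insert : ∀ u S, u ∉ S → (F.neighborSet u ∩ S).Subsingleton → P S → P (insert u S)) :
    P S := by
  induction hn : S.ncard generalizing S with
  | zero => rwa [(Set.ncard_eq_zero hS).1 hn]
  | succ n ih =>
    obtain ⟨u, hu, hsub⟩ := exists_neighborSet_inter_subsingleton_of_isAcyclic hF hS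
      (Set.nonempty_of_ncard_ne_zero (by omega))
    rw [← Set.insert_sdiff_self_of_mem hu]
    refine insert u _ (by simp) (hsub.anti (by gcongr; exact Set.sdiff_subset)) (ih hS.sdiff ?_)
    rw [Set.ncard_sdiff_singleton_of_mem hu, hn, Nat.add_sub_cancel]

end Forest

section BinaryTree

theorem suffix_cons_iff_of_length_le {α : Type*} {r x : List α} (b : α)
    (h : r.length ≤ x.length) : r <:+ b :: x ↔ r <:+ x := by
  refine List.suffix_cons_iff.trans (or_iff_right ?_)
  rintro rfl
  simp at h

/-- `C` is a subtree with root `r` of the infinite binary tree, whose nodes are recorded as reversed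
lists of moves, so that `y` is the parent of `b :: y` and ancestors are suffixes. -/
def IsSubtreeRootedAt (C : Set (List Bool)) (r : List Bool) : Prop :=
  r ∈ C ∧ ∀ x ∈ C, x = r ∨ ∃ b, ∃ y ∈ C, x = b :: y

theorem isSubtreeRootedAt_setOf_suffix (r : List Bool) : IsSubtreeRootedAt {x | r <:+ x} r := by
  refine ⟨List.suffix_rfl, ?_⟩
  rintro (_ | ⟨b, y⟩) hx
  · exact Or.inl (List.suffix_nil.1 hx).symm
  · exact (List.suffix_cons_iff.1 hx).imp Eq.symm fun hy => ⟨b, y, hy, rfl⟩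

theorem IsSubtreeRootedAt.diff_setOf_suffix {C : Set (List Bool)} {r s : List Bool}
    (hC : IsSubtreeRootedAt C r) (hr : ¬ s <:+ r) : IsSubtreeRootedAt (C \ {x | s <:+ x}) r := by
  refine ⟨⟨hC.1, hr⟩, fun x ⟨hx, hsx⟩ => (hC.2 x hx).imp_right ?_⟩
  rintro ⟨b, y, hy, rfl⟩
  exact ⟨b, y, ⟨hy, fun hsy => hsx (List.suffix_cons_iff.2 (Or.inr hsy))⟩, rfl⟩

/-- The labelling obtained from `φ` by giving the label `a` to every node of the subtree of all
descendants of `s`. -/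
def relabelSubtree {α : Type*} (φ : List Bool → α) (s : List Bool) (a : α) (x : List Bool) : α :=
  if s <:+ x then a else φ x

variable {α : Type*} {φ : List Bool → α} {s x : List Bool} {a : α}

theorem relabelSubtree_of_suffix (h : s <:+ x) : relabelSubtree φ s a x = a := if_pos h

theorem relabelSubtree_of_not_suffix (h : ¬ s <:+ x) : relabelSubtree φ s a x = φ x := if_neg h

theorem relabelSubtree_of_length_lt (h : x.length < s.length) : relabelSubtree φ s a x = φ x :=
  relabelSubtree_of_not_suffix fun hs => h.not_ge hs.length_le

theorem relabelSubtree_cons {b : Bool} (hs : s.length ≤ x.length) (hφ : φ (b :: x) = φ x) :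
    relabelSubtree φ s a (b :: x) = relabelSubtree φ s a x := by
  simp only [relabelSubtree, suffix_cons_iff_of_length_le b hs, hφ]

theorem setOf_relabelSubtree_eq_self (ha : ∀ x, φ x ≠ a) :
    {x | relabelSubtree φ s a x = a} = {x | s <:+ x} := by
  ext x
  by_cases h : s <:+ x <;> simp [relabelSubtree, h, ha]

theorem setOf_relabelSubtree_eq_of_ne {b : α} (hab : a ≠ b) :
    {x | relabelSubtree φ s a x = b} = {x | φ x = b} \ {x | s <:+ x} := by
  ext x
  by_cases h : s <:+ x <;> simp [relabelSubtree, h, hab]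

end BinaryTree

/-- A minor model of the subgraph of `F` induced on `S` in the binary tree of height `k`, all of
whose branch sets contain a leaf. It is encoded by the labelling `φ` of the nodes by branch sets,
with `none` for the nodes that are in no branch set. Below depth `k` every node inherits the label
of its parent, so that the leaves hand their labels down when the height is increased. -/
structure LeafyModel {W : Type*} (F : SimpleGraph W) (S : Set W) (k : ℕ)
    (φ : List Bool → Option W) : Prop where
  mem : ∀ x a, φ x = some a → a ∈ S
  cons_eq : ∀ b x, k ≤ x.length → φ (b :: x) = φ x
  exists_leaf : ∀ a ∈ S, ∃ x, x.length = k ∧ φ x = some a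
  exists_root : ∀ a ∈ S, ∃ r, r.length ≤ k ∧ IsSubtreeRootedAt {x | φ x = some a} r
  exists_edge : ∀ a ∈ S, ∀ a' ∈ S, F.Adj a a' →
    ∃ b y, y.length < k ∧ s(φ y, φ (b :: y)) = s(some a, some a')

namespace LeafyModel

variable {W : Type*} {F : SimpleGraph W} {S : Set W} {k : ℕ} {φ : List Bool → Option W}

protected theorem empty (F : SimpleGraph W) (k : ℕ) : LeafyModel F ∅ k fun _ => none := by
  constructor <;> simp

theorem exists_leaf_forall_adj (hφ : LeafyModel F S k φ) {u : W}
    (hu : (F.neighborSet u ∩ S).Subsingleton) :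
    ∃ τ : List Bool, τ.length = k ∧ ∀ a ∈ S, F.Adj u a → φ τ = some a := by
  rcases hu.eq_empty_or_singleton with hu | ⟨p, hu⟩
  · exact ⟨List.replicate k false, List.length_replicate, fun a ha hua =>
      (hu.subset ⟨hua, ha⟩).elim⟩
  · have hp : p ∈ F.neighborSet u ∩ S := hu.symm.subset rfl
    obtain ⟨τ, hτ, hτp⟩ := hφ.exists_leaf p hp.2
    refine ⟨τ, hτ, fun a ha hua => ?_⟩
    obtain rfl : a = p := hu.subset ⟨hua, ha⟩
    exact hτp

theorem exists_leaf_insert (hφ : LeafyModel F S k φ) (u : W) {τ : List Bool} (hτ : τ.length = k)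
    {a : W} (ha : a ∈ insert u S) :
    ∃ x, x.length = k + 1 ∧ relabelSubtree φ (true :: τ) (some u) x = some a := by
  rcases ha with rfl | ha
  · exact ⟨true :: τ, by simp [hτ], relabelSubtree_of_suffix List.suffix_rfl⟩
  · obtain ⟨x, hx, hxa⟩ := hφ.exists_leaf a ha
    have not_suffix : ¬ true :: τ <:+ false :: x := fun h => by
      simpa using h.eq_of_length (by simp [hτ, hx])
    refine ⟨false :: x, by simp [hx], ?_⟩
    rw [relabelSubtree_of_not_suffix not_suffix, hφ.cons_eq false x hx.ge, hxa]

theorem exists_root_insert (hφ : LeafyModel F S k φ) {u : W} (hu : u ∉ S) {τ : List Bool}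
    (hτ : τ.length = k) {a : W} (ha : a ∈ insert u S) :
    ∃ r, r.length ≤ k + 1 ∧
      IsSubtreeRootedAt {x | relabelSubtree φ (true :: τ) (some u) x = some a} r := by
  rcases ha with rfl | ha
  · rw [setOf_relabelSubtree_eq_self fun x hx => hu (hφ.mem x a hx)]
    exact ⟨true :: τ, by simp [hτ], isSubtreeRootedAt_setOf_suffix _⟩
  · obtain ⟨r, hr, hroot⟩ := hφ.exists_root a ha
    have not_suffix : ¬ true :: τ <:+ r := fun h => by
      simpa [hτ, hr.not_gt] using h.length_le
    have hua : some u ≠ some a := (Option.some_injective W).ne (ne_of_mem_of_not_mem ha hu).symm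
    rw [setOf_relabelSubtree_eq_of_ne hua]
    exact ⟨r, by omega, hroot.diff_setOf_suffix not_suffix⟩

theorem exists_edge_insert (hφ : LeafyModel F S k φ) {u : W} {τ : List Bool} (hτ : τ.length = k)
    (hadj : ∀ a ∈ S, F.Adj u a → φ τ = some a) {a a' : W} (ha : a ∈ insert u S)
    (ha' : a' ∈ insert u S) (haa' : F.Adj a a') :
    ∃ b y, y.length < k + 1 ∧ s(relabelSubtree φ (true :: τ) (some u) y,
      relabelSubtree φ (true :: τ) (some u) (b :: y)) = s(some a, some a') := by
  have eq_of_le {x : List Bool} (hx : x.length ≤ k) :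
      relabelSubtree φ (true :: τ) (some u) x = φ x :=
    relabelSubtree_of_length_lt (by simp only [List.length_cons]; omega)
  have edge_to_u {c : W} (hc : c ∈ S) (huc : F.Adj u c) :
      ∃ b y, y.length < k + 1 ∧ s(relabelSubtree φ (true :: τ) (some u) y,
        relabelSubtree φ (true :: τ) (some u) (b :: y)) = s(some c, some u) :=
    ⟨true, τ, by omega, by
      rw [relabelSubtree_of_suffix List.suffix_rfl, eq_of_le hτ.le, hadj c hc huc]⟩
  rcases ha with rfl | ha <;> rcases ha' with rfl | ha'
  · exact absurd rfl haa'.ne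
  · rw [Sym2.eq_swap (a := some a)]
    exact edge_to_u ha' haa'
  · exact edge_to_u ha haa'.symm
  · obtain ⟨b, y, hy, hedge⟩ := hφ.exists_edge a ha a' ha' haa'
    exact ⟨b, y, by omega, by rw [eq_of_le hy.le, eq_of_le (by simpa using hy), hedge]⟩

protected theorem insert (hφ : LeafyModel F S k φ) {u : W} (hu : u ∉ S) {τ : List Bool}
    (hτ : τ.length = k) (hadj : ∀ a ∈ S, F.Adj u a → φ τ = some a) :
    LeafyModel F (insert u S) (k + 1) (relabelSubtree φ (true :: τ) (some u)) where
  mem x a hx := by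
    by_cases h : true :: τ <:+ x
    · rw [relabelSubtree_of_suffix h] at hx
      exact Or.inl (Option.some_injective W hx).symm
    · rw [relabelSubtree_of_not_suffix h] at hx
      exact Or.inr (hφ.mem x a hx)
  cons_eq b x hx :=
    relabelSubtree_cons (by simpa [hτ] using hx) (hφ.cons_eq b x (Nat.le_of_succ_le hx))
  exists_leaf _ ha := hφ.exists_leaf_insert u hτ ha
  exists_root _ ha := hφ.exists_root_insert hu hτ ha
  exists_edge _ ha _ ha' haa' := hφ.exists_edge_insert hτ hadj ha ha' haa'

end LeafyModel

theorem exists_leafyModel_of_isAcyclic {W : Type*} {F : SimpleGraph W} (hF : F.IsAcyclic)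
    {S : Set W} (hS : S.Finite) : ∃ k φ, 0 < k ∧ LeafyModel F S k φ := by
  refine isAcyclic_induction_on (P := fun S => ∃ k φ, 0 < k ∧ LeafyModel F S k φ) hF hS
    ⟨1, _, one_pos, LeafyModel.empty F 1⟩ ?_
  rintro u S hu hsub ⟨k, φ, -, hφ⟩
  obtain ⟨τ, hτ, hadj⟩ := hφ.exists_leaf_forall_adj hsub
  exact ⟨k + 1, _, k.succ_pos, hφ.insert hu hτ hadj⟩

section Pgraph

variable {k : ℕ}

theorem Pgraph_adj_cons (b : Bool) {y : List Bool} (hy : y.length < k) :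
    (Pgraph k).Adj (some ⟨y, hy.le⟩) (some ⟨b :: y, hy⟩) := by
  rw [Pgraph, fromEdgeSet_adj]
  exact ⟨Or.inl ⟨b, y, hy, rfl⟩, by simp⟩

theorem Pgraph_adj_none_of_length_eq {x : List Bool} (hx : x.length = k) :
    (Pgraph k).Adj none (some ⟨x, hx.le⟩) := by
  rw [Pgraph, fromEdgeSet_adj]
  exact ⟨Or.inr ⟨⟨x, hx.le⟩, hx, rfl⟩, by simp⟩

theorem connected_induce_Pgraph_of_isSubtreeRootedAt {C : Set (List Bool)} {r : List Bool}
    (hC : IsSubtreeRootedAt C r) (hr : r.length ≤ k) :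
    ((Pgraph k).induce (some '' {x : CTVert k | x.1 ∈ C})).Connected := by
  rw [connected_iff_exists_forall_reachable]
  refine ⟨⟨some ⟨r, hr⟩, ⟨r, hr⟩, hC.1, rfl⟩, ?_⟩
  rintro ⟨_, ⟨x, hx⟩, hxC, rfl⟩
  induction x with
  | nil =>
    rcases hC.2 [] hxC with rfl | ⟨b, y, -, h⟩
    · rfl
    · simp at h
  | cons c z ih =>
    rcases hC.2 (c :: z) hxC with rfl | ⟨b, y, hy, h⟩
    · rfl
    · obtain ⟨rfl, rfl⟩ := List.cons.inj h
      have hadj : (Pgraph k).Adj _ _ := Pgraph_adj_cons c hx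
      exact (ih (Nat.le_of_succ_le hx) hy).trans (Adj.reachable hadj)

end Pgraph

namespace LeafyModel

variable {W : Type*} {F : SimpleGraph W} {S : Set W} {k : ℕ} {φ : List Bool → Option W}

/-- The branch sets in `𝒫_k` of a minor model of the cone over `F`, given by the labelling `φ` of
the nodes of the infinite binary tree; the apex is modelled by the extra vertex of `𝒫_k`. -/
def branchSet (k : ℕ) (φ : List Bool → Option W) : Option W → Set (Option (CTVert k))
  | none => {none}
  | some a => some '' {x | φ x = some a}

theorem exists_adj_none (hφ : LeafyModel F S k φ) {a : W} (ha : a ∈ S) :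
    ∃ x ∈ branchSet k φ (some a), (Pgraph k).Adj none x := by
  obtain ⟨x, hx, hxa⟩ := hφ.exists_leaf a ha
  exact ⟨_, ⟨⟨x, hx.le⟩, hxa, rfl⟩, Pgraph_adj_none_of_length_eq hx⟩

theorem exists_adj_branchSet (hφ : LeafyModel F S k φ) {a b : W} (ha : a ∈ S) (hb : b ∈ S)
    (hab : F.Adj a b) :
    ∃ x ∈ branchSet k φ (some a), ∃ y ∈ branchSet k φ (some b), (Pgraph k).Adj x y := by
  obtain ⟨c, y, hy, hedge⟩ := hφ.exists_edge a ha b hb hab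
  have hadj := Pgraph_adj_cons c hy
  rcases Sym2.eq_iff.1 hedge with ⟨hya, hcb⟩ | ⟨hyb, hca⟩
  · exact ⟨_, ⟨⟨y, hy.le⟩, hya, rfl⟩, _, ⟨⟨c :: y, hy⟩, hcb, rfl⟩, hadj⟩
  · exact ⟨_, ⟨⟨c :: y, hy⟩, hca, rfl⟩, _, ⟨⟨y, hy.le⟩, hyb, rfl⟩, hadj.symm⟩

theorem isMinorModel_cone (hφ : LeafyModel F Set.univ k φ) :
    IsMinorModel (cone F) (Pgraph k) (branchSet k φ) := by
  refine ⟨?_, ?_, ?_, ?_⟩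
  · rintro (_ | a)
    · exact Set.singleton_nonempty none
    · obtain ⟨x, hx, -⟩ := hφ.exists_adj_none (Set.mem_univ a)
      exact ⟨x, hx⟩
  · rintro (_ | a)
    · rw [branchSet, induce_singleton_eq_top]
      exact connected_top
    · obtain ⟨r, hr, hroot⟩ := hφ.exists_root a (Set.mem_univ a)
      exact connected_induce_Pgraph_of_isSubtreeRootedAt hroot hr
  · rintro (_ | a) (_ | b) hab
    · exact absurd rfl hab
    · simp [branchSet]
    · simp [branchSet]
    · refine (Set.disjoint_image_iff (Option.some_injective _)).2 ?_
      exact Set.disjoint_left.2 fun x hxa hxb => hab (hxa.symm.trans hxb)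
  · rintro (_ | a) (_ | b) hab
    · exact hab.elim
    · exact ⟨none, rfl, hφ.exists_adj_none (Set.mem_univ b)⟩
    · obtain ⟨x, hx, hadj⟩ := hφ.exists_adj_none (Set.mem_univ a)
      exact ⟨x, hx, none, rfl, hadj.symm⟩
    · exact hφ.exists_adj_branchSet (Set.mem_univ a) (Set.mem_univ b) hab

end LeafyModel

theorem exists_isMinor_cone_Pgraph_of_isAcyclic {W : Type*} [Finite W] {F : SimpleGraph W}
    (hF : F.IsAcyclic) : ∃ k, 0 < k ∧ IsMinor (cone F) (Pgraph k) := by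
  obtain ⟨k, φ, hk, hφ⟩ := exists_leafyModel_of_isAcyclic hF Set.finite_univ
  exact ⟨k, hk, _, hφ.isMinorModel_cone⟩

/-- Lemma 2.2. If a graph `H` has a vertex `v` such that `H \ v` is a
forest, then `H` is isomorphic to a minor of `𝒫_k` for some `k`. -/
theorem minor_of_Pk_of_near_forest {V : Type} [Fintype V] (H : SimpleGraph V) (v : V)
    (hv : (H.induce {u | u ≠ v}).IsAcyclic) :
    ∃ k : ℕ, 0 < k ∧ IsMinor H (Pgraph k) := by
  obtain ⟨k, hk, hcone⟩ := exists_isMinor_cone_Pgraph_of_isAcyclic hv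
  exact ⟨k, hk, hcone.of_isContained (isContained_cone_induce_ne H v)⟩
end
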